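/- arXiv:2009.11855 — 3 statements merged into one kernel-verified Lean document; each statement's English description precedes it below -/
import Mathlib

section
/- The problem (BPC) has a unique solution if and only if the Hermitian Toeplitz matrix T_y is neither positive definite nor negative definite. -/
open MeasureTheory Complex Real Matrix
open scoped Real ComplexOrder

noncomputable section

instance : Fact (0 < 2 * π) := ⟨by positivity⟩

/-- The circle `𝕋 = ℝ/2πℤ`. -/
abbrev Circle2pi := AddCircle (2 * π)

/-- The `k`-th Fourier coefficient of a finite signed Borel measure `w` on `𝕋`:
`ŵ[k] = ∫ e^{-ikt} dw⁺(t) - ∫ e^{-ikt} dw⁻(t)`, where `w = w⁺ - w⁻` is the Jordan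
decomposition. -/
noncomputable def sFourierCoeff (w : MeasureTheory.SignedMeasure Circle2pi) (k : ℤ) : ℂ :=
  (∫ t, fourier (-k) t ∂w.toJordanDecomposition.posPart)
    - ∫ t, fourier (-k) t ∂w.toJordanDecomposition.negPart

/-- The total variation norm `‖w‖ = w⁺(𝕋) + w⁻(𝕋)`. -/
noncomputable def tvNorm (w : MeasureTheory.SignedMeasure Circle2pi) : ℝ :=
  (w.totalVariation Set.univ).toReal

/-- `w` is feasible for the data `y` : `ŵ[k] = y k` for all `|k| ≤ K_c`. -/
def Feasible (Kc : ℕ) (y : ℤ → ℂ) (w : MeasureTheory.SignedMeasure Circle2pi) : Prop :=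
  ∀ k : ℤ, |k| ≤ (Kc : ℤ) → sFourierCoeff w k = y k

/-- `w` is a solution of the problem (BPC): it is feasible and minimizes the total
variation norm among feasible measures. -/
def IsBPCSolution (Kc : ℕ) (y : ℤ → ℂ) (w : MeasureTheory.SignedMeasure Circle2pi) : Prop :=
  Feasible Kc y w ∧ ∀ v : MeasureTheory.SignedMeasure Circle2pi, Feasible Kc y v →
    tvNorm w ≤ tvNorm v

/-- The Hermitian Toeplitz matrix `T_y` with entries `(T_y)_{i,j} = y_{j-i}`. -/
def Ty (Kc : ℕ) (y : ℤ → ℂ) : Matrix (Fin (Kc + 1)) (Fin (Kc + 1)) ℂ :=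
  Matrix.of fun i j => y ((j : ℤ) - (i : ℤ))

/-! ### The moment curve -/

/-- The curve `t ↦ (e^{-ikt})_{|k| ≤ K}`. -/
def momentCurve (K : ℕ) : C(Circle2pi, Finset.Icc (-(K : ℤ)) K → ℂ) where
  toFun t k := fourier (-(k : ℤ)) t
  continuous_toFun := by fun_prop

/-- The vector of the Fourier coefficients of order at most `K` of a measure. -/
def moments (K : ℕ) (μ : Measure Circle2pi) : Finset.Icc (-(K : ℤ)) K → ℂ :=
  ∫ t, momentCurve K t ∂μ

/-- The restriction of a sequence to the orders at most `K`. -/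
def truncate (K : ℕ) (y : ℤ → ℂ) : Finset.Icc (-(K : ℤ)) K → ℂ := fun k => y k

lemma integrable_continuousMap {E : Type*} [NormedAddCommGroup E] (μ : Measure Circle2pi)
    [IsFiniteMeasure μ] (f : C(Circle2pi, E)) : Integrable f μ :=
  f.continuous.integrable_of_hasCompactSupport (HasCompactSupport.of_compactSpace _)

lemma moments_apply (K : ℕ) (μ : Measure Circle2pi) [IsFiniteMeasure μ]
    (k : Finset.Icc (-(K : ℤ)) K) : moments K μ k = ∫ t, fourier (-(k : ℤ)) t ∂μ := by
  have h := eval_integral (μ := μ) (f := fun t i => momentCurve K t i)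
    (fun i => integrable_continuousMap μ (fourier (-(i : ℤ)))) k
  exact h

lemma moments_add (K : ℕ) (μ ν : Measure Circle2pi) [IsFiniteMeasure μ] [IsFiniteMeasure ν] :
    moments K (μ + ν) = moments K μ + moments K ν :=
  integral_add_measure (integrable_continuousMap μ _) (integrable_continuousMap ν _)

lemma moments_smul (K : ℕ) (c : NNReal) (μ : Measure Circle2pi) :
    moments K (c • μ) = (c : ℝ) • moments K μ :=
  integral_smul_nnreal_measure _ c

lemma map_moments (K : ℕ) (μ : Measure Circle2pi) [IsFiniteMeasure μ]
    (l : (Finset.Icc (-(K : ℤ)) K → ℂ) →L[ℝ] ℝ) :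
    l (moments K μ) = ∫ t, l (momentCurve K t) ∂μ :=
  (l.integral_comp_comm (integrable_continuousMap μ (momentCurve K))).symm

lemma forall_abs_le_iff (K : ℕ) (P : ℤ → Prop) :
    (∀ k : ℤ, |k| ≤ (K : ℤ) → P k) ↔ ∀ k : Finset.Icc (-(K : ℤ)) K, P k := by
  simp [abs_le]

lemma feasible_iff_moments (K : ℕ) (y : ℤ → ℂ) (w : SignedMeasure Circle2pi) :
    Feasible K y w ↔ moments K w.toJordanDecomposition.posPart
      - moments K w.toJordanDecomposition.negPart = truncate K y := by
  rw [Feasible, forall_abs_le_iff, funext_iff]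
  simp [moments_apply, sFourierCoeff, truncate]

lemma tvNorm_eq (w : SignedMeasure Circle2pi) :
    tvNorm w = w.toJordanDecomposition.posPart.real Set.univ
      + w.toJordanDecomposition.negPart.real Set.univ := by
  simp [tvNorm, SignedMeasure.totalVariation, Measure.real, ENNReal.toReal_add]

lemma tvNorm_toSignedMeasure_sub_le (μ ν : Measure Circle2pi) [IsFiniteMeasure μ]
    [IsFiniteMeasure ν] :
    tvNorm (μ.toSignedMeasure - ν.toSignedMeasure) ≤ μ.real Set.univ + ν.real Set.univ := by
  rw [tvNorm_eq, Measure.toJordanDecomposition_toSignedMeasure_sub]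
  refine add_le_add ?_ ?_
  · exact ENNReal.toReal_mono (measure_ne_top _ _) (Measure.le_iff'.1 Measure.sub_le _)
  · exact ENNReal.toReal_mono (measure_ne_top _ _) (Measure.le_iff'.1 Measure.sub_le _)

lemma posPart_add_eq_add_negPart {w : SignedMeasure Circle2pi} {μ ν : Measure Circle2pi}
    [IsFiniteMeasure μ] [IsFiniteMeasure ν] (h : w = μ.toSignedMeasure - ν.toSignedMeasure) :
    w.toJordanDecomposition.posPart + ν = μ + w.toJordanDecomposition.negPart := by
  rw [← Measure.toSignedMeasure_eq_toSignedMeasure_iff, Measure.toSignedMeasure_add,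
    Measure.toSignedMeasure_add]
  have h' := w.toSignedMeasure_toJordanDecomposition
  rw [JordanDecomposition.toSignedMeasure] at h'
  rw [← sub_eq_sub_iff_add_eq_add, h', h]

lemma feasible_toSignedMeasure_sub_iff (K : ℕ) (y : ℤ → ℂ) (μ ν : Measure Circle2pi)
    [IsFiniteMeasure μ] [IsFiniteMeasure ν] :
    Feasible K y (μ.toSignedMeasure - ν.toSignedMeasure) ↔
      moments K μ - moments K ν = truncate K y := by
  have h := congrArg (moments K) (posPart_add_eq_add_negPart
    (rfl : μ.toSignedMeasure - ν.toSignedMeasure = _))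
  rw [moments_add, moments_add] at h
  rw [feasible_iff_moments, sub_eq_sub_iff_add_eq_add.2 h]

/-! ### Vectors represented by a signed measure of bounded mass -/

/-- The moment vectors of the differences `μ - ν` of positive measures of total mass at most `M`. -/
def momentBall (K : ℕ) (M : NNReal) : Set (Finset.Icc (-(K : ℤ)) K → ℂ) :=
  (fun q : FiniteMeasure Circle2pi × FiniteMeasure Circle2pi =>
    moments K q.1 - moments K q.2) '' {q | q.1.mass + q.2.mass ≤ M}

lemma continuous_moments (K : ℕ) :
    Continuous fun μ : FiniteMeasure Circle2pi => moments K (μ : Measure Circle2pi) := by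
  refine continuous_pi fun k => ?_
  simp_rw [moments_apply]
  refine continuous_iff_continuousAt.2 fun μ => ?_
  exact (FiniteMeasure.tendsto_iff_forall_integral_rclike_tendsto ℂ).1 Filter.tendsto_id
    (BoundedContinuousFunction.mkOfCompact (fourier (-(k : ℤ))))

lemma isCompact_momentBall (K : ℕ) (M : NNReal) : IsCompact (momentBall K M) := by
  refine IsCompact.image ?_ (((continuous_moments K).comp continuous_fst).sub
    ((continuous_moments K).comp continuous_snd))
  have h := isCompact_setOfPred_finiteMeasure_le_of_compactSpace Circle2pi M
  refine (h.prod h).of_isClosed_subset (isClosed_le (by fun_prop) (by fun_prop)) ?_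
  rintro ⟨μ, ν⟩ hq
  exact ⟨(le_self_add : _ ≤ μ.mass + ν.mass).trans hq, (le_add_self : _ ≤ μ.mass + ν.mass).trans hq⟩

lemma convex_momentBall (K : ℕ) (M : NNReal) : Convex ℝ (momentBall K M) := by
  rintro _ ⟨⟨μ₁, ν₁⟩, h₁, rfl⟩ _ ⟨⟨μ₂, ν₂⟩, h₂, rfl⟩ a b ha hb hab
  lift a to NNReal using ha
  lift b to NNReal using hb
  refine ⟨(a • μ₁ + b • μ₂, a • ν₁ + b • ν₂), ?_, ?_⟩
  · have hab' : a + b = 1 := by exact_mod_cast hab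
    simp only [Set.mem_ofPred_eq, FiniteMeasure.mass, FiniteMeasure.coeFn_add,
      FiniteMeasure.coeFn_smul, Pi.add_apply, Pi.smul_apply, smul_eq_mul] at h₁ h₂ ⊢
    calc _ = a * (μ₁ Set.univ + ν₁ Set.univ) + b * (μ₂ Set.univ + ν₂ Set.univ) := by ring
      _ ≤ a * M + b * M := by gcongr
      _ = M := by rw [← add_mul, hab', one_mul]
  · simp only [FiniteMeasure.toMeasure_add, FiniteMeasure.toMeasure_smul, moments_add, moments_smul]
    module

lemma momentCurve_eq_moments_dirac (K : ℕ) (t : Circle2pi) :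
    momentCurve K t = moments K (Measure.dirac t) :=
  (integral_dirac _ _).symm

/-- The diracs of mass `M`. -/
lemma smul_momentCurve_mem_momentBall (K : ℕ) (M : NNReal) (t : Circle2pi) :
    (M : ℝ) • momentCurve K t ∈ momentBall K M ∧
      -((M : ℝ) • momentCurve K t) ∈ momentBall K M := by
  let δ₁ : FiniteMeasure Circle2pi := ⟨Measure.dirac t, inferInstance⟩
  let δ : FiniteMeasure Circle2pi := M • δ₁
  have hm : δ.mass = M := by
    have h₁ : δ₁.mass = 1 := by
      change (Measure.dirac t Set.univ).toNNReal = 1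
      rw [measure_univ, ENNReal.toNNReal_one]
    have h : δ.mass = M * δ₁.mass := by
      change (M • δ₁) Set.univ = M * δ₁ Set.univ
      rw [FiniteMeasure.coeFn_smul, Pi.smul_apply, smul_eq_mul]
    rw [h, h₁, mul_one]
  have hδ : moments K δ = (M : ℝ) • momentCurve K t := by
    rw [momentCurve_eq_moments_dirac, ← moments_smul]
    rfl
  have h0 : moments K (0 : Measure Circle2pi) = 0 := integral_zero_measure _
  refine ⟨⟨(δ, 0), ?_, ?_⟩, ⟨(0, δ), ?_, ?_⟩⟩
  · simp [hm]
  · simp [h0, hδ]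
  · simp [hm]
  · simp [h0, hδ]

/-! ### A function with prescribed low frequencies -/

lemma integral_fourier_haar (n : ℤ) :
    ∫ t : Circle2pi, fourier n t ∂AddCircle.haarAddCircle = if n = 0 then 1 else 0 := by
  split_ifs with h
  · simp [h]
  · exact integral_eq_zero_of_add_right_eq_neg (μ := AddCircle.haarAddCircle)
      (fourier_add_half_inv_index h (by positivity))

lemma exists_continuousMap_moments (K : ℕ) (y : ℤ → ℂ)
    (hsym : ∀ k : ℤ, |k| ≤ (K : ℤ) → y (-k) = starRingEnd ℂ (y k)) :
    ∃ f : C(Circle2pi, ℝ), ∀ l : (Finset.Icc (-(K : ℤ)) K → ℂ) →L[ℝ] ℝ,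
      ∫ t, l (momentCurve K t) * f t ∂AddCircle.haarAddCircle = l (truncate K y) := by
  let F : C(Circle2pi, ℂ) := ∑ k ∈ Finset.Icc (-(K : ℤ)) K, y k • fourier k
  let f : C(Circle2pi, ℝ) := ⟨fun t => (F t).re, by fun_prop⟩
  have hF : ∀ t, F t = ∑ k ∈ Finset.Icc (-(K : ℤ)) K, y k * fourier k t := fun t => by
    simp [F, ContinuousMap.sum_apply]
  have hf : ∀ t, (f t : ℂ) = F t := fun t => by
    refine Complex.conj_eq_iff_re.1 ?_
    rw [hF, map_sum]
    refine Finset.sum_equiv (Equiv.neg ℤ) (by simp [and_comm, neg_le]) fun k hk => ?_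
    rw [Finset.mem_Icc] at hk
    rw [map_mul, ← hsym k (abs_le.2 hk), ← fourier_neg]
    rfl
  refine ⟨f, fun l => ?_⟩
  have hm : ∫ t, f t • momentCurve K t ∂AddCircle.haarAddCircle = truncate K y := by
    funext j
    rw [eval_integral (f := fun t i => (f t • momentCurve K t) i) fun i =>
      integrable_continuousMap _ ⟨fun t => (f t • momentCurve K t) i, by fun_prop⟩]
    have : ∀ t, (f t • momentCurve K t) j =
        ∑ k ∈ Finset.Icc (-(K : ℤ)) K, y k * fourier (k + -(j : ℤ)) t := fun t => by
      rw [Pi.smul_apply, Complex.real_smul, hf, hF, Finset.sum_mul]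
      refine Finset.sum_congr rfl fun k _ => ?_
      rw [fourier_add, mul_assoc]
      rfl
    simp_rw [this]
    rw [integral_finsetSum _ fun k _ => (integrable_continuousMap _ (fourier _)).const_mul _]
    simp_rw [integral_const_mul, integral_fourier_haar, ← sub_eq_add_neg, sub_eq_zero]
    simp only [mul_ite, mul_one, mul_zero, Finset.sum_ite_eq', j.2, if_true]
    rfl
  have hInt : Integrable (fun t => f t • momentCurve K t) AddCircle.haarAddCircle :=
    integrable_continuousMap _ ⟨fun t => f t • momentCurve K t, by fun_prop⟩
  rw [← hm, ← l.integral_comp_comm hInt]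
  simp [mul_comm]

/-! ### Dual certificates -/

/-- The duality: a trigonometric polynomial bounded by one attains the dual norm. -/
lemma exists_dual_certificate (K : ℕ) (y : ℤ → ℂ)
    (hsym : ∀ k : ℤ, |k| ≤ (K : ℤ) → y (-k) = starRingEnd ℂ (y k)) :
    ∃ l : (Finset.Icc (-(K : ℤ)) K → ℂ) →L[ℝ] ℝ, (∀ t, |l (momentCurve K t)| ≤ 1) ∧
      ∀ l' : (Finset.Icc (-(K : ℤ)) K → ℂ) →L[ℝ] ℝ, (∀ t, |l' (momentCurve K t)| ≤ 1) →
        l' (truncate K y) ≤ l (truncate K y) := by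
  obtain ⟨f, hf⟩ := exists_continuousMap_moments K y hsym
  let Φ : ((Finset.Icc (-(K : ℤ)) K → ℂ) →L[ℝ] ℝ) →ₗ[ℝ] C(Circle2pi, ℝ) :=
    { toFun := fun l => ⟨fun t => l (momentCurve K t), by fun_prop⟩
      map_add' := fun _ _ => rfl
      map_smul' := fun _ _ => rfl }
  let L : C(Circle2pi, ℝ) →ₗ[ℝ] ℝ :=
    { toFun := fun p => ∫ t, p t * f t ∂AddCircle.haarAddCircle
      map_add' := fun p q => by
        simp only [ContinuousMap.add_apply, add_mul]
        exact integral_add (integrable_continuousMap _ (p * f)) (integrable_continuousMap _ (q * f))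
      map_smul' := fun c p => by
        simp only [ContinuousMap.smul_apply, smul_eq_mul, mul_assoc, RingHom.id_apply]
        exact integral_const_mul _ _ }
  have hcont : Continuous (L ∘ₗ Φ.range.subtype) := LinearMap.continuous_of_finiteDimensional _
  obtain ⟨⟨p, l, hl⟩, hp, hmax⟩ := (isCompact_closedBall (0 : Φ.range) 1).exists_isMaxOn
    ⟨0, by simp⟩ hcont.continuousOn
  subst hl
  have hmem : ∀ l' : (Finset.Icc (-(K : ℤ)) K → ℂ) →L[ℝ] ℝ, ∀ h,
      (⟨Φ l', h⟩ : Φ.range) ∈ Metric.closedBall (0 : Φ.range) 1 ↔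
        ∀ t, |l' (momentCurve K t)| ≤ 1 := fun l' h => by
    rw [mem_closedBall_zero_iff]
    exact ContinuousMap.norm_le _ zero_le_one
  refine ⟨l, (hmem _ _).1 hp, fun l' hl' => ?_⟩
  have h := hmax ((hmem l' ⟨l', rfl⟩).2 hl')
  rw [← hf, ← hf]
  exact h

lemma mem_momentBall_of_dual_bound {K : ℕ} {z : Finset.Icc (-(K : ℤ)) K → ℂ} {M : NNReal}
    (h : ∀ l : (Finset.Icc (-(K : ℤ)) K → ℂ) →L[ℝ] ℝ, (∀ t, |l (momentCurve K t)| ≤ 1) →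
      l z ≤ M) : z ∈ momentBall K M := by
  by_contra hz
  obtain ⟨l, u, hu, huz⟩ := geometric_hahn_banach_closed_point (convex_momentBall K M)
    (isCompact_momentBall K M).isClosed hz
  have hcurve : ∀ t, M * |l (momentCurve K t)| ≤ u := fun t => by
    have h₁ := hu _ (smul_momentCurve_mem_momentBall K M t).1
    have h₂ := hu _ (smul_momentCurve_mem_momentBall K M t).2
    simp only [map_neg, map_smul, smul_eq_mul] at h₁ h₂
    rcases abs_cases (l (momentCurve K t)) with ⟨h, -⟩ | ⟨h, -⟩ <;> rw [h] <;> linarith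
  obtain ⟨t₀, -, ht₀⟩ := isCompact_univ.exists_isMaxOn (Set.univ_nonempty (α := Circle2pi))
    (f := fun t => |l (momentCurve K t)|) (by fun_prop)
  have hscale : ∀ B : ℝ, |l (momentCurve K t₀)| < B → l z ≤ M * B := fun B hB => by
    have hB0 : 0 < B := (abs_nonneg _).trans_lt hB
    have := h (B⁻¹ • l) fun t => by
      have ht : |l (momentCurve K t)| ≤ |l (momentCurve K t₀)| := ht₀ (Set.mem_univ t)
      rw [_root_.smul_apply, smul_eq_mul, abs_mul, abs_of_pos (inv_pos.2 hB0),
        inv_mul_le_one₀ hB0]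
      exact ht.trans hB.le
    rw [_root_.smul_apply, smul_eq_mul, inv_mul_le_iff₀ hB0] at this
    linarith
  have hle : l z ≤ M * |l (momentCurve K t₀)| := by
    refine ge_of_tendsto (x := nhdsWithin |l (momentCurve K t₀)| (Set.Ioi _))
      (((continuous_const.mul continuous_id).tendsto _).mono_left nhdsWithin_le_nhds)
      (Filter.eventually_of_mem self_mem_nhdsWithin fun B hB => hscale B hB)
  linarith [hcurve t₀]

lemma integral_le_measureReal {μ : Measure Circle2pi} [IsFiniteMeasure μ] {f : Circle2pi → ℝ}
    (hf : Integrable f μ) (h : ∀ t, f t ≤ 1) : ∫ t, f t ∂μ ≤ μ.real Set.univ := by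
  simpa using integral_mono hf (integrable_const (1 : ℝ)) h

lemma measure_ne_one_eq_zero {μ : Measure Circle2pi} [IsFiniteMeasure μ] {f : Circle2pi → ℝ}
    (hf : Integrable f μ) (h : ∀ t, f t ≤ 1) (hμ : μ.real Set.univ ≤ ∫ t, f t ∂μ) :
    μ {t | f t ≠ 1} = 0 := by
  have hInt : ∫ t, (1 - f t) ∂μ = 0 := by
    rw [integral_sub (integrable_const _) hf]
    have := integral_le_measureReal hf h
    simp
    linarith
  rw [integral_eq_zero_iff_of_nonneg (fun t => sub_nonneg.2 (h t))
    ((integrable_const _).sub hf)] at hInt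
  refine measure_mono_null ?_ (ae_iff.1 hInt)
  intro t ht h0
  exact ht (sub_eq_zero.1 h0).symm

/-- Existence of a minimizer, together with a trigonometric polynomial bounded by one on whose
extremal sets every minimizer is concentrated. -/
lemma exists_solution_and_certificate (K : ℕ) (y : ℤ → ℂ)
    (hsym : ∀ k : ℤ, |k| ≤ (K : ℤ) → y (-k) = starRingEnd ℂ (y k)) :
    (∃ w, IsBPCSolution K y w) ∧ ∃ l : (Finset.Icc (-(K : ℤ)) K → ℂ) →L[ℝ] ℝ,
      (∀ t, |l (momentCurve K t)| ≤ 1) ∧ ∀ w, IsBPCSolution K y w →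
        w.toJordanDecomposition.posPart {t | l (momentCurve K t) ≠ 1} = 0 ∧
        w.toJordanDecomposition.negPart {t | l (momentCurve K t) ≠ -1} = 0 := by
  obtain ⟨l, hl, hmax⟩ := exists_dual_certificate K y hsym
  have h0 : 0 ≤ l (truncate K y) := by simpa using hmax 0 (by simp)
  have hmem : truncate K y ∈ momentBall K ⟨_, h0⟩ := mem_momentBall_of_dual_bound hmax
  have hInt : ∀ (μ : Measure Circle2pi) [IsFiniteMeasure μ],
      Integrable (fun t => l (momentCurve K t)) μ := fun μ _ =>
    integrable_continuousMap μ ⟨fun t => l (momentCurve K t), by fun_prop⟩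
  have hle : ∀ t, l (momentCurve K t) ≤ 1 := fun t => (abs_le.1 (hl t)).2
  have hle' : ∀ t, -l (momentCurve K t) ≤ 1 := fun t => by linarith [(abs_le.1 (hl t)).1]
  have hval : ∀ v, Feasible K y v → l (truncate K y) =
      ∫ t, l (momentCurve K t) ∂v.toJordanDecomposition.posPart
        + ∫ t, -l (momentCurve K t) ∂v.toJordanDecomposition.negPart := fun v hv => by
    rw [← (feasible_iff_moments K y v).1 hv, map_sub, map_moments, map_moments, integral_neg,
      sub_eq_add_neg]
  obtain ⟨⟨μ, ν⟩, hM, hμν⟩ := hmem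
  have hw : Feasible K y ((μ : Measure Circle2pi).toSignedMeasure
      - (ν : Measure Circle2pi).toSignedMeasure) :=
    (feasible_toSignedMeasure_sub_iff ..).2 hμν
  have hwM : tvNorm ((μ : Measure Circle2pi).toSignedMeasure
      - (ν : Measure Circle2pi).toSignedMeasure) ≤ l (truncate K y) :=
    (tvNorm_toSignedMeasure_sub_le _ _).trans (NNReal.coe_le_coe.2 hM)
  refine ⟨⟨_, hw, fun v hv => hwM.trans ?_⟩, l, hl, fun w hsol => ?_⟩
  · rw [hval v hv, tvNorm_eq]
    exact add_le_add (integral_le_measureReal (hInt _) hle)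
      (integral_le_measureReal (hInt _).neg hle')
  · have hwl := (hsol.2 _ hw).trans hwM
    rw [hval w hsol.1, tvNorm_eq] at hwl
    have h₁ := integral_le_measureReal (hInt w.toJordanDecomposition.posPart) hle
    have h₂ := integral_le_measureReal (hInt w.toJordanDecomposition.negPart).neg hle'
    simp only [Pi.neg_apply] at h₂
    refine ⟨measure_ne_one_eq_zero (hInt _) hle (by linarith), ?_⟩
    have := measure_ne_one_eq_zero (hInt w.toJordanDecomposition.negPart).neg hle'
      (by simp only [Pi.neg_apply]; linarith)
    simpa [neg_eq_iff_eq_neg] using this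

/-! ### Measures concentrated on few points -/

lemma fourier_one_pow (n : ℕ) (t : Circle2pi) : fourier 1 t ^ n = fourier (n : ℤ) t := by
  induction n with
  | zero => simp
  | succ n ih => rw [pow_succ, ih, Nat.cast_succ, fourier_add]

lemma fourier_one_injective : Function.Injective fun t : Circle2pi => fourier 1 t := by
  intro s t h
  simp only [fourier_one] at h
  exact AddCircle.injective_toCircle (by positivity) (Circle.ext h)

lemma exists_finset_polynomial_zeros {P : Polynomial ℂ} (hP : P ≠ 0) {N : ℕ}
    (hN : P.natDegree ≤ N) :
    ∃ Z : Finset Circle2pi, Z.card ≤ N ∧ ∀ t, P.eval (fourier 1 t) = 0 → t ∈ Z := by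
  classical
  refine ⟨P.roots.toFinset.preimage _ fourier_one_injective.injOn, ?_, fun t ht => ?_⟩
  · refine (Finset.card_le_card_of_injOn _ (fun t ht => ?_) fourier_one_injective.injOn).trans
      ((Multiset.toFinset_card_le _).trans (P.card_roots'.trans hN))
    simpa using ht
  · simpa [hP] using ht

lemma integral_polynomial_congr {K : ℕ} {μ ν : Measure Circle2pi} [IsFiniteMeasure μ]
    [IsFiniteMeasure ν] (h : moments K μ = moments K ν) {P : Polynomial ℂ}
    (hP : P.natDegree ≤ 2 * K) :
    ∫ t, fourier (-(K : ℤ)) t * P.eval (fourier 1 t) ∂μ =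
      ∫ t, fourier (-(K : ℤ)) t * P.eval (fourier 1 t) ∂ν := by
  have hexp : ∀ t : Circle2pi, fourier (-(K : ℤ)) t * P.eval (fourier 1 t) =
      ∑ n ∈ Finset.range (2 * K + 1), P.coeff n * fourier (-((K : ℤ) - n)) t := fun t => by
    rw [Polynomial.eval_eq_sum_range' (Nat.lt_succ_of_le hP), Finset.mul_sum]
    refine Finset.sum_congr rfl fun n _ => ?_
    rw [neg_sub, sub_eq_neg_add, fourier_add, fourier_one_pow]
    ring
  simp_rw [hexp]
  rw [integral_finsetSum _ fun k _ => (integrable_continuousMap μ (fourier _)).const_mul _,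
    integral_finsetSum _ fun k _ => (integrable_continuousMap ν (fourier _)).const_mul _]
  refine Finset.sum_congr rfl fun n hn => ?_
  have hmem : (K : ℤ) - n ∈ Finset.Icc (-(K : ℤ)) K := by
    rw [Finset.mem_range] at hn
    rw [Finset.mem_Icc]
    omega
  rw [integral_const_mul, integral_const_mul, ← moments_apply K μ ⟨_, hmem⟩,
    ← moments_apply K ν ⟨_, hmem⟩, h]

lemma measure_ext_of_singleton {μ ν : Measure Circle2pi} {Z : Finset Circle2pi}
    (hμ : μ (Z : Set Circle2pi)ᶜ = 0) (hν : ν (Z : Set Circle2pi)ᶜ = 0)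
    (h : ∀ z ∈ Z, μ {z} = ν {z}) : μ = ν := by
  classical
  ext s -
  have hs : ∀ ρ : Measure Circle2pi, ρ (Z : Set Circle2pi)ᶜ = 0 →
      ρ s = ∑ z ∈ Z.filter (· ∈ s), ρ {z} := fun ρ hρ => by
    rw [sum_measure_singleton, ← measure_inter_add_sdiff s Z.measurableSet,
      measure_mono_null (s := s \ Z) (fun _ hx => hx.2) hρ, add_zero]
    congr 1
    ext x
    simp [and_comm]
  rw [hs μ hμ, hs ν hν]
  exact Finset.sum_congr rfl fun z hz => h z (Finset.mem_filter.1 hz).1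

lemma integral_eq_of_concentrated {μ : Measure Circle2pi} {Z : Finset Circle2pi}
    (hμ : μ (Z : Set Circle2pi)ᶜ = 0) {f : Circle2pi → ℂ} {z : Circle2pi}
    (hf : ∀ x ∈ Z, x ≠ z → f x = 0) : ∫ t, f t ∂μ = μ.real {z} * f z := by
  have : f =ᵐ[μ] Set.indicator {z} fun _ => f z := by
    filter_upwards [mem_ae_iff.2 hμ] with x hx
    by_cases hxz : x = z
    · simp [hxz]
    · simp [hxz, hf x hx hxz]
  rw [integral_congr_ae this, integral_indicator_const _ (measurableSet_singleton z),
    Complex.real_smul]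

lemma measure_ext_of_moments {K : ℕ} {μ ν : Measure Circle2pi} [IsFiniteMeasure μ]
    [IsFiniteMeasure ν] (h : moments K μ = moments K ν) {Z : Finset Circle2pi}
    (hZ : Z.card ≤ 2 * K) (hμ : μ (Z : Set Circle2pi)ᶜ = 0) (hν : ν (Z : Set Circle2pi)ᶜ = 0) :
    μ = ν := by
  classical
  refine measure_ext_of_singleton hμ hν fun z hz => ?_
  let P : Polynomial ℂ := ∏ x ∈ Z.erase z, (Polynomial.X - Polynomial.C (fourier 1 x))
  have hP : P.natDegree ≤ 2 * K := by
    rw [Polynomial.natDegree_finsetProd_X_sub_C_eq_card]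
    exact (Finset.card_erase_le).trans hZ
  have hzero : ∀ x ∈ Z, x ≠ z → fourier (-(K : ℤ)) x * P.eval (fourier 1 x) = 0 := fun x hx hxz => by
    rw [Polynomial.eval_prod, Finset.prod_eq_zero (Finset.mem_erase.2 ⟨hxz, hx⟩) (by simp),
      mul_zero]
  have hne : fourier (-(K : ℤ)) z * P.eval (fourier 1 z) ≠ 0 := by
    refine mul_ne_zero (by simp [fourier_apply]) ?_
    rw [Polynomial.eval_prod, Finset.prod_ne_zero_iff]
    intro x hx
    simpa [sub_eq_zero] using fun h => (Finset.mem_erase.1 hx).1 (fourier_one_injective h).symm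
  have hInt := integral_polynomial_congr h hP
  rw [integral_eq_of_concentrated hμ hzero, integral_eq_of_concentrated hν hzero] at hInt
  have hreal : μ.real {z} = ν.real {z} := by exact_mod_cast mul_right_cancel₀ hne hInt
  exact (measureReal_eq_measureReal_iff).1 hreal

lemma feasible_ext_of_concentrated {K : ℕ} {y : ℤ → ℂ} {w v : SignedMeasure Circle2pi}
    (hw : Feasible K y w) (hv : Feasible K y v) {Z : Finset Circle2pi} (hZ : Z.card ≤ 2 * K)
    (hwp : w.toJordanDecomposition.posPart (Z : Set Circle2pi)ᶜ = 0)
    (hwn : w.toJordanDecomposition.negPart (Z : Set Circle2pi)ᶜ = 0)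
    (hvp : v.toJordanDecomposition.posPart (Z : Set Circle2pi)ᶜ = 0)
    (hvn : v.toJordanDecomposition.negPart (Z : Set Circle2pi)ᶜ = 0) : w = v := by
  rw [feasible_iff_moments] at hw hv
  have h : w.toJordanDecomposition.posPart + v.toJordanDecomposition.negPart
      = v.toJordanDecomposition.posPart + w.toJordanDecomposition.negPart := by
    refine measure_ext_of_moments (K := K) ?_ hZ (by simp [hwp, hvn]) (by simp [hvp, hwn])
    rw [moments_add, moments_add, ← sub_eq_sub_iff_add_eq_add, hw, hv]
  rw [← Measure.toSignedMeasure_eq_toSignedMeasure_iff, Measure.toSignedMeasure_add,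
    Measure.toSignedMeasure_add, ← sub_eq_sub_iff_add_eq_add] at h
  rw [← w.toSignedMeasure_toJordanDecomposition, ← v.toSignedMeasure_toJordanDecomposition]
  exact h

/-! ### Extremal points of real trigonometric polynomials -/

lemma exists_coeff_eq_sum_fourier (K : ℕ) (l : (Finset.Icc (-(K : ℤ)) K → ℂ) →L[ℝ] ℝ) :
    ∃ a : ℤ → ℂ, ∀ t, (l (momentCurve K t) : ℂ) =
      ∑ k ∈ Finset.Icc (-(K : ℤ)) K, a k * fourier k t := by
  let e : ℂ → ℤ → Finset.Icc (-(K : ℤ)) K → ℂ := fun c k j => if (j : ℤ) = k then c else 0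
  refine ⟨fun k => (l (e 1 k) + l (e I k) * I) / 2 + (l (e 1 (-k)) - l (e I (-k)) * I) / 2,
    fun t => ?_⟩
  have hvec : momentCurve K t = ∑ k ∈ Finset.Icc (-(K : ℤ)) K,
      ((fourier (-k) t).re • e 1 k + (fourier (-k) t).im • e I k) := by
    funext j
    have : ∀ k : ℤ, ((fourier (-k) t).re • e 1 k + (fourier (-k) t).im • e I k) j =
        if (j : ℤ) = k then fourier (-k) t else 0 := fun k => by
      by_cases h : (j : ℤ) = k
      · simp [e, h, -fourier_apply]
      · simp [e, h]
    rw [Finset.sum_apply, Finset.sum_congr rfl fun k _ => this k, Finset.sum_ite_eq, if_pos j.2]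
    rfl
  have hneg : ∑ k ∈ Finset.Icc (-(K : ℤ)) K,
        (l (e 1 (-k)) - l (e I (-k)) * I) / 2 * fourier k t =
      ∑ k ∈ Finset.Icc (-(K : ℤ)) K, (l (e 1 k) - l (e I k) * I) / 2 * fourier (-k) t :=
    Finset.sum_equiv (Equiv.neg ℤ) (by simp [and_comm, neg_le]) fun k _ => by
      simp [-fourier_apply]
  simp_rw [add_mul]
  rw [Finset.sum_add_distrib, hneg, ← Finset.sum_add_distrib, hvec, map_sum, Complex.ofReal_sum]
  refine Finset.sum_congr rfl fun k _ => ?_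
  rw [map_add, map_smul, map_smul, fourier_neg]
  apply Complex.ext <;> simp [-fourier_apply] <;> ring

lemma derivative_eq_zero_of_extremal {K : ℕ} {l : (Finset.Icc (-(K : ℤ)) K → ℂ) →L[ℝ] ℝ}
    (hl : ∀ t, |l (momentCurve K t)| ≤ 1) {a : ℤ → ℂ}
    (ha : ∀ t, (l (momentCurve K t) : ℂ) = ∑ k ∈ Finset.Icc (-(K : ℤ)) K, a k * fourier k t)
    {t : Circle2pi} (ht : l (momentCurve K t) = 1 ∨ l (momentCurve K t) = -1) :
    ∑ k ∈ Finset.Icc (-(K : ℤ)) K, (k * a k) * fourier k t = 0 := by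
  obtain ⟨x, rfl⟩ := QuotientAddGroup.mk_surjective t
  have hD : HasDerivAt (fun s : ℝ => (l (momentCurve K (s : Circle2pi)) : ℂ))
      (∑ k ∈ Finset.Icc (-(K : ℤ)) K, a k * (2 * π * I * k / (2 * π : ℝ) *
        fourier k (x : Circle2pi))) x := by
    simp_rw [ha]
    exact HasDerivAt.fun_sum fun k _ => (hasDerivAt_fourier (2 * π) k x).const_mul (a k)
  have hre := Complex.reCLM.hasFDerivAt.comp_hasDerivAt x hD
  have hre' : HasDerivAt (fun s : ℝ => l (momentCurve K (s : Circle2pi))) _ x := hre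
  have h0 : (Complex.reCLM (∑ k ∈ Finset.Icc (-(K : ℤ)) K, a k * (2 * π * I * k / (2 * π : ℝ) *
        fourier k (x : Circle2pi)))) = 0 := by
    rcases ht with ht | ht
    · refine IsLocalMax.hasDerivAt_eq_zero (.of_forall fun s => ?_) hre'
      exact (abs_le.1 (hl s)).2.trans_eq ht.symm
    · refine IsLocalMin.hasDerivAt_eq_zero (.of_forall fun s => ?_) hre'
      exact ht.trans_le (abs_le.1 (hl s)).1
  rw [h0] at hre'
  have hzero := hD.unique hre'.ofReal_comp
  have hfac : ∑ k ∈ Finset.Icc (-(K : ℤ)) K, a k * (2 * π * I * k / (2 * π : ℝ) *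
        fourier k (x : Circle2pi)) =
      I * ∑ k ∈ Finset.Icc (-(K : ℤ)) K, (k * a k) * fourier k (x : Circle2pi) := by
    rw [Finset.mul_sum]
    refine Finset.sum_congr rfl fun k _ => ?_
    have : (π : ℂ) ≠ 0 := by exact_mod_cast Real.pi_ne_zero
    push_cast
    field_simp
  rw [hfac, Complex.ofReal_zero] at hzero
  exact (mul_eq_zero.1 hzero).resolve_left I_ne_zero

/-- A real trigonometric polynomial bounded by one is constant or takes the values `±1` at no more
than twice its degree many points. -/
lemma exists_finset_extremal_or_const {K : ℕ} {l : (Finset.Icc (-(K : ℤ)) K → ℂ) →L[ℝ] ℝ}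
    (hl : ∀ t, |l (momentCurve K t)| ≤ 1) :
    (∃ Z : Finset Circle2pi, Z.card ≤ 2 * K ∧
      ∀ t, l (momentCurve K t) = 1 ∨ l (momentCurve K t) = -1 → t ∈ Z) ∨
    ∃ c : ℝ, ∀ t, l (momentCurve K t) = c := by
  obtain ⟨a, ha⟩ := exists_coeff_eq_sum_fourier K l
  let P : Polynomial ℂ := ∑ n ∈ Finset.range (2 * K + 1),
    Polynomial.monomial n (((n - K : ℤ) : ℂ) * a (n - K))
  have hdeg : P.natDegree ≤ 2 * K := by
    refine Polynomial.natDegree_sum_le_of_forall_le _ _ fun n hn => ?_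
    exact (Polynomial.natDegree_monomial_le _).trans (Finset.mem_range_succ_iff.1 hn)
  have heval : ∀ t : Circle2pi, fourier (-(K : ℤ)) t * P.eval (fourier 1 t) =
      ∑ k ∈ Finset.Icc (-(K : ℤ)) K, (k * a k) * fourier k t := fun t => by
    rw [Polynomial.eval_finsetSum, Finset.mul_sum]
    refine Finset.sum_nbij' (fun n => (n : ℤ) - K) (fun k => (k + K).toNat) ?_ ?_ ?_ ?_ ?_
    · intro n hn
      simp only [Finset.mem_range, Finset.mem_Icc] at hn ⊢
      omega
    · intro k hk
      simp only [Finset.mem_range, Finset.mem_Icc] at hk ⊢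
      omega
    · intro n _
      simp
    · intro k hk
      simp only [Finset.mem_Icc] at hk
      omega
    · intro n _
      rw [Polynomial.eval_monomial, fourier_one_pow, sub_eq_add_neg, fourier_add]
      ring
  by_cases hP : P = 0
  · right
    have hcoeff : ∀ k ∈ Finset.Icc (-(K : ℤ)) K, k ≠ 0 → a k = 0 := fun k hk hk0 => by
      rw [Finset.mem_Icc] at hk
      have h := congrArg (fun Q => Polynomial.coeff Q (k + K).toNat) hP
      simp only [P, Polynomial.finsetSum_coeff, Polynomial.coeff_monomial, Polynomial.coeff_zero,
        Finset.sum_ite_eq', Finset.mem_range] at h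
      rw [if_pos (by omega)] at h
      have hk' : (((k + K).toNat : ℤ) - K) = k := by omega
      rw [hk'] at h
      exact (mul_eq_zero.1 h).resolve_left (by exact_mod_cast hk0)
    refine ⟨(a 0).re, fun t => ?_⟩
    have := ha t
    rw [Finset.sum_eq_single 0 (fun k hk hk0 => by rw [hcoeff k hk hk0, zero_mul])
      (fun h => absurd (Finset.mem_Icc.2 (by omega)) h), fourier_zero, mul_one] at this
    rw [← this, Complex.ofReal_re]
  · left
    obtain ⟨Z, hZ, hmem⟩ := exists_finset_polynomial_zeros hP hdeg
    refine ⟨Z, hZ, fun t ht => hmem t ?_⟩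
    have h := heval t
    rw [derivative_eq_zero_of_extremal hl ha ht] at h
    exact (mul_eq_zero.1 h).resolve_left (by simp [fourier_apply])

/-! ### Singular Toeplitz matrices -/

lemma isHermitian_Ty {K : ℕ} {y : ℤ → ℂ}
    (hsym : ∀ k : ℤ, |k| ≤ (K : ℤ) → y (-k) = starRingEnd ℂ (y k)) : (Ty K y).IsHermitian := by
  ext i j
  have h := hsym ((i : ℤ) - j) (by rw [abs_le]; omega)
  rw [neg_sub] at h
  exact h.symm

lemma Ty_neg (K : ℕ) (y : ℤ → ℂ) : Ty K (-y) = -Ty K y := rfl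

lemma star_dotProduct_Ty_mulVec {K : ℕ} {y : ℤ → ℂ} {μ : Measure Circle2pi} [IsFiniteMeasure μ]
    (hμ : moments K μ = truncate K y) (x : Fin (K + 1) → ℂ) :
    star x ⬝ᵥ (Ty K y *ᵥ x) =
      ((∫ t, ‖∑ j : Fin (K + 1), star (x j) * fourier (j : ℤ) t‖ ^ 2 ∂μ : ℝ) : ℂ) := by
  have hy : ∀ i j : Fin (K + 1), Ty K y i j = ∫ t, fourier (i : ℤ) t * fourier (-(j : ℤ)) t ∂μ :=
    fun i j => by
      have hmem : (j : ℤ) - i ∈ Finset.Icc (-(K : ℤ)) K := by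
        rw [Finset.mem_Icc]
        omega
      have h := (congrFun hμ ⟨_, hmem⟩).symm
      rw [moments_apply] at h
      refine h.trans (integral_congr_ae (.of_forall fun t => ?_))
      simp only [neg_sub]
      rw [sub_eq_add_neg, fourier_add]
  have hexp : ∀ t : Circle2pi,
      ((‖∑ j : Fin (K + 1), star (x j) * fourier (j : ℤ) t‖ ^ 2 : ℝ) : ℂ) =
      ∑ i : Fin (K + 1), ∑ j : Fin (K + 1),
        (star (x i) * x j) * (fourier (i : ℤ) t * fourier (-(j : ℤ)) t) := fun t => by
    rw [Complex.ofReal_pow, ← Complex.mul_conj', map_sum, Finset.sum_mul_sum]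
    refine Finset.sum_congr rfl fun i _ => Finset.sum_congr rfl fun j _ => ?_
    rw [map_mul, fourier_neg, RCLike.star_def, Complex.conj_conj]
    ring
  have hInt : ∀ i j : Fin (K + 1), Integrable (fun t : Circle2pi =>
      (star (x i) * x j) * (fourier (i : ℤ) t * fourier (-(j : ℤ)) t)) μ := fun i j =>
    (integrable_continuousMap μ (fourier (i : ℤ) * fourier (-(j : ℤ)))).const_mul _
  rw [← integral_complex_ofReal]
  simp_rw [hexp]
  rw [integral_finsetSum _ fun i _ => integrable_finsetSum _ fun j _ => hInt i j]
  refine Finset.sum_congr rfl fun i _ => ?_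
  rw [integral_finsetSum _ fun j _ => hInt i j, mulVec, dotProduct, Finset.mul_sum]
  refine Finset.sum_congr rfl fun j _ => ?_
  rw [integral_const_mul, hy, Pi.star_apply]
  ring

/-- If the Toeplitz matrix is not positive definite, all positive measures with the given moments
are concentrated on a common small finite set. -/
lemma exists_finset_concentrated_of_not_posDef {K : ℕ} {y : ℤ → ℂ}
    (hsym : ∀ k : ℤ, |k| ≤ (K : ℤ) → y (-k) = starRingEnd ℂ (y k)) (h : ¬(Ty K y).PosDef) :
    ∃ Z : Finset Circle2pi, Z.card ≤ 2 * K ∧ ∀ (μ : Measure Circle2pi) [IsFiniteMeasure μ],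
      moments K μ = truncate K y → μ (Z : Set Circle2pi)ᶜ = 0 := by
  rw [Matrix.posDef_iff_dotProduct_mulVec] at h
  push Not at h
  obtain ⟨x, hx, hpos⟩ := h (isHermitian_Ty hsym)
  let P : Polynomial ℂ := ∑ j : Fin (K + 1), Polynomial.monomial (j : ℕ) (star (x j))
  have hP : P ≠ 0 := fun hP => hx <| funext fun i => by
    have h := congrArg (fun Q => Polynomial.coeff Q i) hP
    simpa [P, Polynomial.finsetSum_coeff, Polynomial.coeff_monomial, Fin.val_inj] using h
  have hdeg : P.natDegree ≤ 2 * K := by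
    refine Polynomial.natDegree_sum_le_of_forall_le _ _ fun j _ => ?_
    exact (Polynomial.natDegree_monomial_le _).trans (by omega)
  obtain ⟨Z, hZ, hmem⟩ := exists_finset_polynomial_zeros hP hdeg
  refine ⟨Z, hZ, fun μ _ hμ => ?_⟩
  have heval : ∀ t : Circle2pi,
      P.eval (fourier 1 t) = ∑ j : Fin (K + 1), star (x j) * fourier (j : ℤ) t := fun t => by
    simp only [P, Polynomial.eval_finsetSum, Polynomial.eval_monomial, fourier_one_pow]
  have hq := star_dotProduct_Ty_mulVec hμ x
  simp_rw [← heval] at hq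
  rw [hq, Complex.zero_lt_real, not_lt] at hpos
  have hnn : ∀ t : Circle2pi, 0 ≤ ‖P.eval (fourier 1 t)‖ ^ 2 := fun t => by positivity
  have hzero := hpos.antisymm (integral_nonneg hnn)
  rw [integral_eq_zero_iff_of_nonneg hnn (integrable_continuousMap μ
    ⟨fun t => ‖P.eval (fourier 1 t)‖ ^ 2, by fun_prop⟩)] at hzero
  refine measure_mono_null ?_ (ae_iff.1 hzero)
  intro t ht h0
  exact ht (hmem t (by simpa [-fourier_apply] using h0))

lemma existsUnique_solution {K : ℕ} {y : ℤ → ℂ}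
    (hsym : ∀ k : ℤ, |k| ≤ (K : ℤ) → y (-k) = starRingEnd ℂ (y k))
    (hpos : ¬(Ty K y).PosDef) (hneg : ¬(-(Ty K y)).PosDef) :
    ∃! w : SignedMeasure Circle2pi, IsBPCSolution K y w := by
  obtain ⟨⟨w₀, hw₀⟩, l, hl, hconc⟩ := exists_solution_and_certificate K y hsym
  suffices h : ∃ Z : Finset Circle2pi, Z.card ≤ 2 * K ∧ ∀ w, IsBPCSolution K y w →
      w.toJordanDecomposition.posPart (Z : Set Circle2pi)ᶜ = 0 ∧
      w.toJordanDecomposition.negPart (Z : Set Circle2pi)ᶜ = 0 by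
    obtain ⟨Z, hZ, h⟩ := h
    exact ⟨w₀, hw₀, fun w hw => feasible_ext_of_concentrated hw.1 hw₀.1 hZ (h w hw).1 (h w hw).2
      (h w₀ hw₀).1 (h w₀ hw₀).2⟩
  have hzero : moments K 0 = 0 := integral_zero_measure _
  rcases exists_finset_extremal_or_const hl with ⟨Z, hZ, hmem⟩ | ⟨c, hc⟩
  · refine ⟨Z, hZ, fun w hw => ⟨measure_mono_null ?_ (hconc w hw).1,
      measure_mono_null ?_ (hconc w hw).2⟩⟩
    · exact fun t ht h => ht (hmem t (.inl h))
    · exact fun t ht h => ht (hmem t (.inr h))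
  · simp_rw [hc] at hconc
    have hp : c ≠ 1 → ∀ w, IsBPCSolution K y w → w.toJordanDecomposition.posPart = 0 :=
      fun h w hw => by simpa [h] using (hconc w hw).1
    have hn : c ≠ -1 → ∀ w, IsBPCSolution K y w → w.toJordanDecomposition.negPart = 0 :=
      fun h w hw => by simpa [h] using (hconc w hw).2
    by_cases h₁ : c = 1
    · obtain ⟨Z, hZ, h⟩ := exists_finset_concentrated_of_not_posDef hsym hpos
      have hn' := hn (by rw [h₁]; norm_num)
      refine ⟨Z, hZ, fun w hw => ⟨h _ ?_, by simp [hn' w hw]⟩⟩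
      have := (feasible_iff_moments K y w).1 hw.1
      rwa [hn' w hw, hzero, sub_zero] at this
    by_cases h₂ : c = -1
    · rw [← Ty_neg] at hneg
      obtain ⟨Z, hZ, h⟩ := exists_finset_concentrated_of_not_posDef
        (fun k hk => by simp [hsym k hk]) hneg
      refine ⟨Z, hZ, fun w hw => ⟨by simp [hp h₁ w hw], h _ ?_⟩⟩
      have := (feasible_iff_moments K y w).1 hw.1
      rw [hp h₁ w hw, hzero, zero_sub] at this
      rw [← neg_neg (moments K _), this]
      rfl
    · exact ⟨∅, by simp, fun w hw => by simp [hp h₁ w hw, hn h₂ w hw]⟩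

/-! ### The trigonometric moment problem for positive definite Toeplitz matrices -/

lemma exists_fourier_neg_one_eq {c : ℂ} (hc : ‖c‖ = 1) :
    ∃ t : Circle2pi, fourier (-1) t = c := by
  refine ⟨((-c.arg : ℝ) : Circle2pi), ?_⟩
  rw [fourier_coe_apply]
  have h := Complex.norm_mul_exp_arg_mul_I c
  rw [hc, Complex.ofReal_one, one_mul] at h
  conv_rhs => rw [← h]
  congr 1
  have : (π : ℂ) ≠ 0 := by exact_mod_cast Real.pi_ne_zero
  push_cast
  field_simp

/-- The spectral measure of a vector with respect to a linear isometry of a finite-dimensional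
space. -/
lemma exists_spectral_measure (d : ℕ) : ∀ {V : Type} [NormedAddCommGroup V]
    [InnerProductSpace ℂ V] [FiniteDimensional ℂ V], Module.finrank ℂ V = d →
    ∀ (U : V →ₗᵢ[ℂ] V) (x : V), ∃ (μ : Measure Circle2pi) (Z : Finset Circle2pi),
      IsFiniteMeasure μ ∧ μ (Z : Set Circle2pi)ᶜ = 0 ∧
      ∀ n : ℕ, inner ℂ x (U^[n] x) = ∫ t, fourier (-(n : ℤ)) t ∂μ := by
  classical
  induction d with
  | zero =>
    intro V _ _ _ hV U x
    have := Module.finrank_zero_iff.1 hV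
    exact ⟨0, ∅, inferInstance, by simp, fun n => by simp [Subsingleton.elim x 0]⟩
  | succ d ih =>
    intro V _ _ _ hV U x
    have : Nontrivial V := Module.nontrivial_of_finrank_pos (R := ℂ) (by omega)
    obtain ⟨c, hc⟩ := Module.End.exists_eigenvalue U.toLinearMap
    obtain ⟨v, hv⟩ := hc.exists_hasEigenvector
    have hv0 : ‖v‖ ≠ 0 := norm_ne_zero_iff.2 hv.2
    obtain ⟨e, he1, heU⟩ : ∃ e : V, ‖e‖ = 1 ∧ U e = c • e := by
      refine ⟨((‖v‖⁻¹ : ℝ) : ℂ) • v, ?_, ?_⟩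
      · simp [norm_smul, hv0]
      · have : U v = c • v := hv.apply_eq_smul
        rw [map_smul, this, smul_comm]
    have hc1 : ‖c‖ = 1 := by
      have := U.norm_map e
      rwa [heU, norm_smul, he1, mul_one] at this
    have hc0 : c ≠ 0 := norm_ne_zero_iff.1 (by rw [hc1]; norm_num)
    let W : Submodule ℂ V := (Submodule.span ℂ {e})ᗮ
    have hW : ∀ u, u ∈ W ↔ inner ℂ e u = 0 := fun u =>
      Submodule.mem_orthogonal_singleton_iff_inner_right
    have hUW : ∀ u ∈ W, U u ∈ W := fun u hu => by
      rw [hW] at hu ⊢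
      have h := U.inner_map_map e u
      rw [heU, inner_smul_left, hu] at h
      exact (mul_eq_zero.1 h).resolve_left (by simpa using hc0)
    let U' : W →ₗᵢ[ℂ] W := ⟨U.toLinearMap.restrict hUW, fun u => U.norm_map u⟩
    have hdim : Module.finrank ℂ W = d := by
      have : Fact (Module.finrank ℂ V = d + 1) := ⟨hV⟩
      exact Submodule.finrank_orthogonal_span_singleton (norm_ne_zero_iff.1 (by rw [he1]; norm_num))
    let a : ℂ := inner ℂ e x
    have hee : inner ℂ e e = (1 : ℂ) := by rw [inner_self_eq_norm_sq_to_K, he1]; simp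
    have hx' : x - a • e ∈ W := by
      rw [hW, inner_sub_right, inner_smul_right, hee, mul_one, sub_self]
    let x' : W := ⟨x - a • e, hx'⟩
    obtain ⟨μ, Z, hfin, hμ, hInt⟩ := ih hdim U' x'
    obtain ⟨t, ht⟩ := exists_fourier_neg_one_eq hc1
    have hpow : ∀ n : ℕ, fourier (-(n : ℤ)) t = c ^ n := fun n => by
      rw [fourier_neg, ← fourier_one_pow, map_pow, ← fourier_neg, ht]
    have hiter : ∀ n : ℕ, U^[n] x = (a * c ^ n) • e + (U'^[n] x' : W) := fun n => by
      induction n with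
      | zero => simp [x']
      | succ n ihn =>
        rw [Function.iterate_succ_apply', Function.iterate_succ_apply', ihn, map_add, map_smul, heU,
          smul_smul, pow_succ, mul_assoc]
        rfl
    refine ⟨(‖a‖₊ ^ 2) • Measure.dirac t + μ, insert t Z, inferInstance, ?_, fun n => ?_⟩
    · rw [Measure.add_apply, measure_mono_null (μ := μ) (by simp) hμ]
      simp
    · rw [integral_add_measure ((integrable_continuousMap _ _)) (integrable_continuousMap _ _),
        integral_smul_nnreal_measure, integral_dirac, ← hInt, hpow, hiter]
      have hxe : x = a • e + (x' : V) := by simp [x']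
      conv_lhs => rw [hxe]
      have h₁ : inner ℂ e ((U'^[n] x' : W) : V) = 0 := (hW _).1 (U'^[n] x').2
      have h₂ : inner ℂ (x' : V) e = 0 := by
        rw [← inner_conj_symm, (hW _).1 x'.2, map_zero]
      rw [inner_add_left, inner_add_right, inner_add_right, inner_smul_left, inner_smul_left,
        inner_smul_right, inner_smul_right, hee, h₁, h₂, Submodule.coe_inner]
      have ha : (starRingEnd ℂ) a * a = ((‖a‖ ^ 2 : ℝ) : ℂ) := by
        rw [Complex.conj_mul', Complex.ofReal_pow]
      rw [NNReal.smul_def, Complex.real_smul, NNReal.coe_pow, coe_nnnorm, ← ha]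
      ring

lemma exists_isometry_of_gram_eq {ι V : Type*} [Fintype ι] [NormedAddCommGroup V]
    [InnerProductSpace ℂ V] [FiniteDimensional ℂ V] {u v : ι → V} (hu : LinearIndependent ℂ u)
    (h : ∀ i j, inner ℂ (u i) (u j) = inner ℂ (v i) (v j)) :
    ∃ U : V →ₗᵢ[ℂ] V, ∀ i, U (u i) = v i := by
  classical
  let A := Fintype.linearCombination ℂ u
  let B := Fintype.linearCombination ℂ v
  have hA : Function.Injective A := linearIndependent_iff_injective_fintypeLinearCombination.1 hu
  have hnorm : ∀ c, ‖A c‖ = ‖B c‖ := fun c => by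
    have hinner : inner ℂ (A c) (A c) = inner ℂ (B c) (B c) := by
      simp only [A, B, Fintype.linearCombination_apply, sum_inner, inner_sum, inner_smul_left,
        inner_smul_right, h]
    rw [@norm_eq_sqrt_re_inner ℂ, @norm_eq_sqrt_re_inner ℂ, hinner]
  let e := LinearEquiv.ofInjective A hA
  let L : A.range →ₗᵢ[ℂ] V := ⟨B ∘ₗ e.symm.toLinearMap, fun z => by
    have : A (e.symm z) = z := congrArg Subtype.val (e.apply_symm_apply z)
    rw [LinearMap.comp_apply, LinearEquiv.coe_coe, ← hnorm, this]
    rfl⟩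
  refine ⟨L.extend, fun i => ?_⟩
  have hi : (e (Pi.single i 1) : V) = u i := by
    simp [e, A]
  have hLi : L (e (Pi.single i 1)) = v i := by
    change B (e.symm (e (Pi.single i 1))) = v i
    simp [B]
  rw [← hi, LinearIsometry.extend_apply, hLi]

open scoped MatrixOrder Matrix.Norms.L2Operator in
lemma Matrix.PosDef.exists_gram {n : Type} [Fintype n] [DecidableEq n] {T : Matrix n n ℂ}
    (hT : T.PosDef) : ∃ b : n → EuclideanSpace ℂ n, LinearIndependent ℂ b ∧
      ∀ i j, inner ℂ (b i) (b j) = T i j := by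
  obtain ⟨B, rfl⟩ := CStarAlgebra.nonneg_iff_eq_star_mul_self.mp hT.posSemidef.nonneg
  let b : n → EuclideanSpace ℂ n := fun i => WithLp.toLp 2 fun r => B r i
  have hb : ∀ i j, inner ℂ (b i) (b j) = (star B * B) i j := fun i j => by
    simp [b, PiLp.inner_apply, Matrix.mul_apply, mul_comm]
  refine ⟨b, ?_, hb⟩
  rw [Fintype.linearIndependent_iff]
  intro c hc
  by_contra! hne
  have hpos := hT.dotProduct_mulVec_pos (x := c) (fun h => by simp [h] at hne)
  have hz : inner ℂ (∑ i, c i • b i) (∑ i, c i • b i) = star c ⬝ᵥ ((star B * B) *ᵥ c) := by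
    simp only [sum_inner, inner_sum, inner_smul_left, inner_smul_right, hb, dotProduct, mulVec,
      Finset.mul_sum, Pi.star_apply, RCLike.star_def]
    rw [Finset.sum_comm]
    refine Finset.sum_congr rfl fun i _ => Finset.sum_congr rfl fun j _ => ?_
    ring
  rw [← hz, hc, inner_zero_left] at hpos
  exact lt_irrefl _ hpos

/-- A positive definite Toeplitz matrix is represented by a positive measure of finite support. -/
lemma exists_measure_of_posDef {K : ℕ} {y : ℤ → ℂ}
    (hsym : ∀ k : ℤ, |k| ≤ (K : ℤ) → y (-k) = starRingEnd ℂ (y k)) (hT : (Ty K y).PosDef) :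
    ∃ (μ : Measure Circle2pi) (Z : Finset Circle2pi), IsFiniteMeasure μ ∧
      μ (Z : Set Circle2pi)ᶜ = 0 ∧ moments K μ = truncate K y := by
  obtain ⟨b, hb, hgram⟩ := hT.exists_gram
  obtain ⟨U, hU⟩ := exists_isometry_of_gram_eq (u := fun i : Fin K => b i.castSucc)
    (v := fun i : Fin K => b i.succ) (hb.comp _ (Fin.castSucc_injective K)) fun i j => by
      rw [hgram, hgram]
      simp [Ty]
  have hiter : ∀ n (hn : n < K + 1), U^[n] (b 0) = b ⟨n, hn⟩ := fun n => by
    induction n with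
    | zero => exact fun _ => rfl
    | succ n ih =>
      intro hn
      rw [Function.iterate_succ_apply', ih (by omega)]
      exact hU ⟨n, by omega⟩
  obtain ⟨μ, Z, hfin, hμ, hInt⟩ := exists_spectral_measure _ rfl U (b 0)
  have hnat : ∀ n : ℕ, n ≤ K → ∫ t, fourier (-(n : ℤ)) t ∂μ = y n := fun n hn => by
    rw [← hInt, hiter n (by omega), hgram]
    simp [Ty]
  refine ⟨μ, Z, hfin, hμ, funext fun ⟨k, hk⟩ => ?_⟩
  rw [Finset.mem_Icc] at hk
  rw [moments_apply]
  change ∫ t, fourier (-k) t ∂μ = y k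
  obtain ⟨n, rfl | rfl⟩ := k.eq_nat_or_neg
  · exact hnat n (by omega)
  · rw [hsym n (by rw [abs_le]; omega), ← hnat n (by omega), ← integral_conj]
    refine integral_congr_ae (.of_forall fun t => ?_)
    simp only
    rw [← fourier_neg]

/-! ### Definite Toeplitz matrices -/

lemma Matrix.PosDef.exists_sub_smul_one {n : Type} [Fintype n] [DecidableEq n] [Nonempty n]
    {T : Matrix n n ℂ} (hT : T.PosDef) : ∃ ε : NNReal, 0 < ε ∧ (T - (ε : ℂ) • 1).PosDef := by
  obtain ⟨i₀, hi₀⟩ := Finite.exists_min hT.1.eigenvalues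
  have h0 := hT.eigenvalues_pos i₀
  refine ⟨⟨hT.1.eigenvalues i₀ / 2, by positivity⟩, ?_, ?_⟩
  · change 0 < hT.1.eigenvalues i₀ / 2
    positivity
  · set ε : ℝ := hT.1.eigenvalues i₀ / 2 with hε
    have hU := Unitary.coe_mul_star_self hT.1.eigenvectorUnitary
    have hdiag : T - (ε : ℂ) • 1 = (hT.1.eigenvectorUnitary : Matrix n n ℂ) *
        diagonal (fun i => ((hT.1.eigenvalues i - ε : ℝ) : ℂ)) *
        star (hT.1.eigenvectorUnitary : Matrix n n ℂ) := by
      conv_lhs => rw [hT.1.spectral_theorem, Unitary.conjStarAlgAut_apply, ← hU]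
      rw [show diagonal (fun i => ((hT.1.eigenvalues i - ε : ℝ) : ℂ)) =
        diagonal (RCLike.ofReal ∘ hT.1.eigenvalues) - (ε : ℂ) • (1 : Matrix n n ℂ) by
          ext i j; by_cases h : i = j <;> simp [diagonal, h]]
      simp [mul_sub, sub_mul]
    change (T - (ε : ℂ) • 1).PosDef
    rw [hdiag, Unitary.isUnit_coe.posDef_star_right_conjugate_iff, posDef_diagonal_iff]
    intro i
    have := hi₀ i
    norm_cast
    linarith

lemma isBPCSolution_of_moments {K : ℕ} {y : ℤ → ℂ} {μ : Measure Circle2pi} [IsFiniteMeasure μ]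
    (hμ : moments K μ = truncate K y) :
    IsBPCSolution K y (μ.toSignedMeasure - (0 : Measure Circle2pi).toSignedMeasure) := by
  have h0 : moments K 0 = 0 := integral_zero_measure _
  refine ⟨(feasible_toSignedMeasure_sub_iff ..).2 (by rw [h0, sub_zero, hμ]), fun v hv => ?_⟩
  have hmem : (0 : ℤ) ∈ Finset.Icc (-(K : ℤ)) K := by simp
  have hmass : ∀ (ν : Measure Circle2pi) [IsFiniteMeasure ν],
      moments K ν ⟨0, hmem⟩ = ν.real Set.univ := fun ν _ => by
    rw [moments_apply]
    simp
  have h := congrFun (((feasible_iff_moments K y v).1 hv).trans hμ.symm) ⟨0, hmem⟩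
  rw [Pi.sub_apply, hmass, hmass, hmass] at h
  norm_cast at h
  refine (tvNorm_toSignedMeasure_sub_le _ _).trans ?_
  rw [tvNorm_eq, ← h]
  have := measureReal_nonneg (μ := v.toJordanDecomposition.negPart) (s := Set.univ)
  simp only [measureReal_zero_apply, add_zero]
  linarith

lemma not_posDef_of_existsUnique {K : ℕ} {y : ℤ → ℂ}
    (hsym : ∀ k : ℤ, |k| ≤ (K : ℤ) → y (-k) = starRingEnd ℂ (y k))
    (h : ∃! w : SignedMeasure Circle2pi, IsBPCSolution K y w) : ¬(Ty K y).PosDef := by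
  intro hT
  obtain ⟨ε, hε, hTε⟩ := hT.exists_sub_smul_one
  obtain ⟨μ, Z, _, hμZ, hμ⟩ := exists_measure_of_posDef hsym hT
  let y' : ℤ → ℂ := fun k => y k - if k = 0 then (ε : ℂ) else 0
  have hTy' : Ty K y' = Ty K y - (ε : ℂ) • 1 := by
    ext i j
    simp [Ty, y', Matrix.one_apply, sub_eq_zero, Fin.ext_iff, eq_comm]
  obtain ⟨ν, -, _, -, hν⟩ := exists_measure_of_posDef (K := K) (y := y') (fun k hk => by
    simp only [y', neg_eq_zero, map_sub, hsym k hk]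
    split_ifs <;> simp) (hTy' ▸ hTε)
  have hhaar : moments K (ν + ε • AddCircle.haarAddCircle) = truncate K y := by
    rw [moments_add, moments_smul, hν]
    funext k
    rw [Pi.add_apply, Pi.smul_apply, moments_apply, integral_fourier_haar]
    simp [truncate, y']
  have heq := h.unique (isBPCSolution_of_moments hμ) (isBPCSolution_of_moments hhaar)
  rw [sub_left_inj, Measure.toSignedMeasure_eq_toSignedMeasure_iff] at heq
  rw [heq] at hμZ
  have hZc : (AddCircle.haarAddCircle : Measure Circle2pi) (Z : Set Circle2pi)ᶜ = 0 := by
    rw [Measure.add_apply, add_eq_zero] at hμZ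
    simpa [hε.ne'] using hμZ.2
  have : Infinite (Set.Ico (0 : ℝ) (0 + 2 * π)) := Set.Ico.infinite (by linarith [Real.pi_pos])
  have : Infinite Circle2pi := (AddCircle.equivIco (2 * π) 0).infinite_iff.2 this
  obtain ⟨t, ht⟩ := Infinite.exists_notMem_finset Z
  exact (Z.finite_toSet.isClosed.isOpen_compl.measure_pos _ ⟨t, ht⟩).ne' hZc

lemma isBPCSolution_neg_iff {K : ℕ} {y : ℤ → ℂ} {w : SignedMeasure Circle2pi} :
    IsBPCSolution K (-y) (-w) ↔ IsBPCSolution K y w := by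
  have hF : ∀ z v, Feasible K z v → Feasible K (-z) (-v) := fun z v hv k hk => by
    rw [Pi.neg_apply, ← hv k hk]
    simp [sFourierCoeff, SignedMeasure.toJordanDecomposition_neg]
  have htv : ∀ v, tvNorm (-v) = tvNorm v := fun v => by
    rw [tvNorm, tvNorm, SignedMeasure.totalVariation_neg]
  have hsol : ∀ z v, IsBPCSolution K z v → IsBPCSolution K (-z) (-v) := fun z v hv =>
    ⟨hF z v hv.1, fun u hu => by
      rw [htv, ← htv u]
      exact hv.2 _ (by simpa using hF _ _ hu)⟩
  exact ⟨fun h => by simpa using hsol _ _ h, hsol y w⟩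

/-- (BPC) has a unique solution if and only if `T_y` is neither positive definite nor
negative definite. -/
theorem unique_solution_iff_Ty_not_definite (Kc : ℕ) (hKc : 1 ≤ Kc) (y : ℤ → ℂ)
    (hsym : ∀ k : ℤ, |k| ≤ (Kc : ℤ) → y (-k) = starRingEnd ℂ (y k)) :
    (∃! w : MeasureTheory.SignedMeasure Circle2pi, IsBPCSolution Kc y w) ↔
      (¬ (Ty Kc y).PosDef ∧ ¬ (-(Ty Kc y)).PosDef) := by
  constructor
  · intro h
    refine ⟨not_posDef_of_existsUnique hsym h, ?_⟩
    rw [← Ty_neg]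
    refine not_posDef_of_existsUnique (fun k hk => by simp [hsym k hk]) ?_
    obtain ⟨w, hw, huniq⟩ := h
    exact ⟨-w, isBPCSolution_neg_iff.2 hw, fun v hv => by
      rw [← huniq (-v) (isBPCSolution_neg_iff.1 (by simpa using hv)), neg_neg]⟩
  · exact fun ⟨h₁, h₂⟩ => existsUnique_solution hsym h₁ h₂
end
end

section
/- (Carathéodory–Fejér–Pisarenko decomposition, rank-deficient case.) Let n ≥ 1 and let T ∈ ℂ^{(n+1)×(n+1)} be a Hermitian Toeplitz matrix ((T)_{i,j} = c_{j−i} for some sequence c with c_{−m} = conj(c_m)) that is positive semidefinite with r := rank(T) ≤ n. Then there exist pairwise distinct x_1,…,x_r ∈ 𝕋 = ℝ/2πℤ and strictly positive reals a_1,…,a_r such that T = V D V*, where V ∈ ℂ^{(n+1)×r} has entries V_{m,k} = e^{i m x_k} (0 ≤ m ≤ n, 1 ≤ k ≤ r) and D is the diagonal matrix with diagonal (a_1,…,a_r); moreover the sets {x_1,…,x_r} and the associated weights are unique (the decomposition is unique up to permutation of the indices). -/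
open MeasureTheory Complex Real Matrix
open scoped Real ComplexOrder

noncomputable section

/-- The Vandermonde matrix `V_x ∈ ℂ^{(n+1)×K}` with entries `(V_x)_{m,k} = e^{i m x_k}`. -/
noncomputable def Vand (n K : ℕ) (x : Fin K → Circle2pi) : Matrix (Fin (n + 1)) (Fin K) ℂ :=
  Matrix.of fun (m : Fin (n + 1)) (k : Fin K) => fourier (m : ℤ) (x k)

/-- The Toeplitz matrix with symbol `c`, whose `(i, j)` entry is `c (j - i)`. -/
def toeplitz (n : ℕ) (c : ℤ → ℂ) : Matrix (Fin (n + 1)) (Fin (n + 1)) ℂ :=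
  Matrix.of fun (i j : Fin (n + 1)) => c ((j : ℤ) - (i : ℤ))

theorem toeplitz_apply (n : ℕ) (c : ℤ → ℂ) (i j : Fin (n + 1)) :
    toeplitz n c i j = c ((j : ℤ) - (i : ℤ)) := rfl

theorem toFn_apply (n : ℕ) (p : Polynomial ℂ) (i : Fin n) :
    Polynomial.toFn n p i = p.coeff i := rfl

theorem fourier_natCast_eq_pow (m : ℕ) (x : Circle2pi) :
    fourier (m : ℤ) x = ((AddCircle.toCircle x : Circle) : ℂ) ^ m := by
  rw [fourier_apply, natCast_zsmul, AddCircle.toCircle_nsmul, Circle.coe_pow]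

theorem fourier_sub_eq_mul_conj (m k : ℤ) (x : Circle2pi) :
    fourier (m - k) x = fourier m x * starRingEnd ℂ (fourier k x) := by
  rw [sub_eq_add_neg, fourier_add, fourier_neg]

/-- Multiplying a polynomial of degree `< n` by `X` shifts its image under a Toeplitz matrix. -/
theorem toeplitz_mulVec_X_mul (n : ℕ) (c : ℤ → ℂ) (g : Polynomial ℂ) (hg : g.coeff n = 0)
    (i : Fin n) :
    (toeplitz n c *ᵥ Polynomial.toFn (n + 1) (Polynomial.X * g)) i.succ =
      (toeplitz n c *ᵥ Polynomial.toFn (n + 1) g) i.castSucc := by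
  simp only [Matrix.mulVec, dotProduct, toeplitz_apply, toFn_apply]
  rw [Fin.sum_univ_succ, Fin.sum_univ_castSucc]
  simp [hg]

/-- A nonzero polynomial of minimal degree whose coefficient vector is in the kernel of a
singular matrix. -/
theorem exists_minimal_kernel_polynomial (n : ℕ) (T : Matrix (Fin (n + 1)) (Fin (n + 1)) ℂ)
    (hrank : T.rank ≤ n) :
    ∃ q : Polynomial ℂ, q ≠ 0 ∧ q.natDegree ≤ n ∧ T *ᵥ Polynomial.toFn (n + 1) q = 0 ∧
      ∀ g : Polynomial ℂ, g ≠ 0 → g.natDegree < q.natDegree →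
        T *ᵥ Polynomial.toFn (n + 1) g ≠ 0 := by
  classical
  have hdet : T.det = 0 := by
    by_contra h
    have := Matrix.rank_of_isUnit T ((Matrix.isUnit_iff_isUnit_det T).2 (isUnit_iff_ne_zero.2 h))
    simp at this
    omega
  obtain ⟨v, hv0, hv⟩ := Matrix.exists_mulVec_eq_zero_iff.2 hdet
  have hex : ∃ d : ℕ, ∃ p : Polynomial ℂ, p ≠ 0 ∧ p.natDegree = d ∧ d ≤ n ∧
      T *ᵥ Polynomial.toFn (n + 1) p = 0 := by
    have hcoeff : Polynomial.toFn (n + 1) (Polynomial.ofFn (n + 1) v) = v := by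
      ext i
      rw [toFn_apply, Polynomial.ofFn_coeff_eq_val_of_lt v i.2]
    refine ⟨_, Polynomial.ofFn (n + 1) v, ?_, rfl, ?_, by rw [hcoeff, hv]⟩
    · intro h
      rw [h, map_zero] at hcoeff
      exact hv0 hcoeff.symm
    · rw [Polynomial.natDegree_le_iff_coeff_eq_zero]
      intro m hm
      exact Polynomial.ofFn_coeff_eq_zero_of_ge v hm
  obtain ⟨q, hq0, hqd, hqn, hq⟩ := Nat.find_spec hex
  refine ⟨q, hq0, hqd.trans_le hqn, hq, fun g hg0 hgd hg => ?_⟩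
  rw [hqd] at hgd
  exact Nat.find_min hex hgd ⟨g, hg0, rfl, hgd.le.trans hqn, hg⟩

/-- A nonzero singular positive semidefinite Toeplitz matrix has a Fourier vector in its range. -/
theorem exists_toeplitz_mulVec_eq_fourier (n : ℕ) (c : ℤ → ℂ) (hpsd : (toeplitz n c).PosSemidef)
    (h0 : toeplitz n c ≠ 0) (hrank : (toeplitz n c).rank ≤ n) :
    ∃ (w : Fin (n + 1) → ℂ) (x : Circle2pi),
      toeplitz n c *ᵥ w = fun i : Fin (n + 1) => fourier ((i : ℕ) : ℤ) x := by
  obtain ⟨q, hq0, hqn, hq, hmin⟩ := exists_minimal_kernel_polynomial n _ hrank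
  have hdeg : 0 < q.natDegree := by
    by_contra h
    obtain ⟨a, rfl⟩ := Polynomial.natDegree_eq_zero.1 (Nat.eq_zero_of_not_pos h)
    have ha : a ≠ 0 := by simpa using hq0
    have hcol : ∀ i, toeplitz n c i 0 = 0 := by
      intro i
      have := congrFun hq i
      simpa [Matrix.mulVec, dotProduct, toFn_apply, Polynomial.coeff_C, Fin.val_eq_zero_iff,
        ha] using this
    have hlow : ∀ i j, j ≤ i → toeplitz n c i j = 0 := by
      intro i j hij
      have hij' : (j : ℕ) ≤ i := hij
      have := hcol ⟨i - j, by omega⟩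
      rw [toeplitz_apply] at this ⊢
      convert this using 2
      simp
      omega
    refine h0 (Matrix.ext fun i j => ?_)
    rcases le_total j i with hij | hij
    · exact hlow i j hij
    · rw [← hpsd.isHermitian.apply, hlow j i hij]
      simp
  obtain ⟨z, hz⟩ := Complex.exists_root (Polynomial.natDegree_pos_iff_degree_pos.1 hdeg)
  obtain ⟨g, rfl⟩ := Polynomial.dvd_iff_isRoot.2 hz
  have hg0 : g ≠ 0 := right_ne_zero_of_mul hq0
  have hgd : g.natDegree + 1 = ((Polynomial.X - Polynomial.C z) * g).natDegree := by
    rw [Polynomial.natDegree_mul (Polynomial.X_sub_C_ne_zero z) hg0, Polynomial.natDegree_X_sub_C,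
      add_comm]
  have hgn : g.coeff n = 0 := Polynomial.coeff_eq_zero_of_natDegree_lt (by omega)
  have hTg := hmin g hg0 (by omega)
  set T := toeplitz n c with hT
  set u := Polynomial.toFn (n + 1) g with hu
  set s := Polynomial.toFn (n + 1) (Polynomial.X * g) with hs
  have hshift : T *ᵥ s = z • (T *ᵥ u) := by
    rw [sub_mul, ← Polynomial.smul_eq_C_mul, map_sub, map_smul, Matrix.mulVec_sub,
      Matrix.mulVec_smul, sub_eq_zero] at hq
    exact hq
  have hstep : ∀ i : Fin n, (T *ᵥ u) i.castSucc = z * (T *ᵥ u) i.succ := by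
    intro i
    rw [← toeplitz_mulVec_X_mul n c g hgn i, ← hT, ← hs, hshift, Pi.smul_apply, smul_eq_mul]
  have hnorm : star s ⬝ᵥ (T *ᵥ s) = star u ⬝ᵥ (T *ᵥ u) := by
    simp only [dotProduct, Pi.star_apply]
    rw [Fin.sum_univ_succ, Fin.sum_univ_castSucc]
    simp only [hT, hs, toeplitz_mulVec_X_mul n c g hgn]
    simp [hu, toFn_apply, hgn]
  have hadj : star s ⬝ᵥ (T *ᵥ u) = star z * (star u ⬝ᵥ (T *ᵥ u)) := by
    have h := hpsd.isHermitian.eq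
    calc star s ⬝ᵥ (T *ᵥ u) = star (T *ᵥ s) ⬝ᵥ u := by
          rw [Matrix.star_mulVec, h, Matrix.dotProduct_mulVec]
      _ = star z * (star (T *ᵥ u) ⬝ᵥ u) := by
          rw [hshift, star_smul, smul_dotProduct, smul_eq_mul]
      _ = _ := by rw [Matrix.star_mulVec, h, Matrix.dotProduct_mulVec]
  have hpos : star u ⬝ᵥ (T *ᵥ u) ≠ 0 := fun h => hTg ((hpsd.dotProduct_mulVec_zero_iff u).1 h)
  have hzz : z * star z = 1 := by
    rw [hshift, dotProduct_smul, hadj, smul_eq_mul, ← mul_assoc] at hnorm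
    exact mul_right_cancel₀ hpos (hnorm.trans (one_mul _).symm)
  have hpow : ∀ i : ℕ, ∀ hi : i < n + 1, (T *ᵥ u) ⟨i, hi⟩ = star z ^ i * (T *ᵥ u) 0 := by
    intro i
    induction i with
    | zero => intro hi; simp
    | succ k ih =>
      intro hi
      have h1 := hstep ⟨k, by omega⟩
      have h2 := ih (by omega)
      simp only [Fin.castSucc_mk, Fin.succ_mk] at h1
      rw [h1] at h2
      calc (T *ᵥ u) ⟨k + 1, hi⟩ = (z * star z) * (T *ᵥ u) ⟨k + 1, hi⟩ := by rw [hzz, one_mul]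
        _ = star z * (z * (T *ᵥ u) ⟨k + 1, hi⟩) := by ring
        _ = _ := by rw [h2]; ring
  have hne : (T *ᵥ u) 0 ≠ 0 := by
    intro h
    refine hTg (funext fun i => ?_)
    have := hpow i i.2
    rwa [h, mul_zero] at this
  have hzn : star z ∈ Submonoid.unitSphere ℂ := by
    rw [← SetLike.mem_coe, Submonoid.coe_unitSphere, mem_sphere_zero_iff_norm, norm_star]
    have : ‖z‖ * ‖z‖ = 1 := by simpa using congrArg norm hzz
    nlinarith [norm_nonneg z]
  obtain ⟨x, hx⟩ := (AddCircle.homeomorphCircle (T := 2 * π) (by positivity)).surjective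
    ⟨star z, hzn⟩
  rw [AddCircle.homeomorphCircle_apply] at hx
  refine ⟨((T *ᵥ u) 0)⁻¹ • u, x, funext fun i => ?_⟩
  rw [Matrix.mulVec_smul, Pi.smul_apply, smul_eq_mul, hpow i i.2, fourier_natCast_eq_pow, hx]
  field_simp

/-- Subtracting from a positive semidefinite matrix the multiple of `v v*`, with `v = T w`, that
annihilates `w` keeps it positive semidefinite and lowers the rank. -/
theorem exists_posSemidef_sub_vecMulVec {m : Type*} [Fintype m] [DecidableEq m]
    {T : Matrix m m ℂ} (hT : T.PosSemidef) {v w : m → ℂ} (hw : T *ᵥ w = v) (hv : v ≠ 0) :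
    ∃ α : ℝ, 0 < α ∧ (T - (α : ℂ) • Matrix.vecMulVec v (star v)).PosSemidef ∧
      (T - (α : ℂ) • Matrix.vecMulVec v (star v)).rank < T.rank := by
  have hnn : 0 ≤ star w ⬝ᵥ v := hw ▸ hT.dotProduct_mulVec_nonneg w
  have hne : star w ⬝ᵥ v ≠ 0 := fun h =>
    hv (hw ▸ (hT.dotProduct_mulVec_zero_iff w).1 (hw.symm ▸ h))
  obtain ⟨β, hβ0, hβ⟩ : ∃ β : ℝ, 0 < β ∧ star w ⬝ᵥ v = β := by
    obtain ⟨hre, him⟩ := Complex.pos_iff.1 (lt_of_le_of_ne hnn hne.symm)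
    exact ⟨_, hre, Complex.ext rfl (by simpa using him.symm)⟩
  have hβc : (β : ℂ) ≠ 0 := by exact_mod_cast hβ0.ne'
  have hwT : star w ᵥ* T = star v := by
    rw [← hw, Matrix.star_mulVec, hT.isHermitian.eq]
  set P : Matrix m m ℂ := 1 - ((β⁻¹ : ℝ) : ℂ) • Matrix.vecMulVec w (star v) with hP
  have hTP : T * P = T - ((β⁻¹ : ℝ) : ℂ) • Matrix.vecMulVec v (star v) := by
    rw [hP, mul_sub, mul_one, mul_smul_comm, Matrix.mul_vecMulVec, hw]
  have hPTP : Pᴴ * T * P = T - ((β⁻¹ : ℝ) : ℂ) • Matrix.vecMulVec v (star v) := by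
    have hPH : Pᴴ = 1 - ((β⁻¹ : ℝ) : ℂ) • Matrix.vecMulVec v (star w) := by
      rw [hP, Matrix.conjTranspose_sub, Matrix.conjTranspose_one, Matrix.conjTranspose_smul,
        Matrix.conjTranspose_vecMulVec, star_star]
      simp
    rw [mul_assoc, hTP, hPH, sub_mul, one_mul, mul_sub, smul_mul_assoc, smul_mul_assoc,
      Matrix.vecMulVec_mul, hwT, mul_smul_comm, Matrix.vecMulVec_mul_vecMulVec, hβ]
    simp [Matrix.vecMulVec_smul, smul_smul, hβc, -Complex.coe_smul]
  refine ⟨β⁻¹, inv_pos.2 hβ0, hPTP ▸ hT.conjTranspose_mul_mul_same P, ?_⟩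
  rw [← hTP]
  refine Submodule.finrank_lt_finrank_of_lt (lt_of_le_of_ne ?_ ?_)
  · rintro _ ⟨y, rfl⟩
    exact ⟨P *ᵥ y, by simp⟩
  · intro heq
    have hmem : v ∈ LinearMap.range (T * P).mulVecLin := by
      rw [heq]
      exact ⟨w, hw⟩
    obtain ⟨y, hy⟩ := hmem
    refine hne ?_
    rw [← hy, Matrix.mulVecLin_apply, Matrix.dotProduct_mulVec, hTP, Matrix.vecMul_sub,
      Matrix.vecMul_smul, hwT, Matrix.vecMul_vecMulVec, hβ]
    simp [hβc]

/-- A singular positive semidefinite Toeplitz matrix is the moment matrix of a positive measure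
supported on at most `rank` points. -/
theorem exists_finsupp_moment_of_posSemidef (n : ℕ) (r : ℕ) : ∀ c : ℤ → ℂ,
    (toeplitz n c).PosSemidef → (toeplitz n c).rank ≤ n → (toeplitz n c).rank = r →
    ∃ μ : Circle2pi →₀ ℝ, (∀ x, 0 ≤ μ x) ∧ μ.support.card ≤ r ∧
      ∀ i j : Fin (n + 1), toeplitz n c i j =
        μ.sum fun x a => (a : ℂ) * fourier ((i : ℤ) - (j : ℤ)) x := by
  classical
  induction r using Nat.strong_induction_on with
  | _ r ih =>
    intro c hpsd hrank hr
    by_cases h0 : toeplitz n c = 0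
    · exact ⟨0, by simp, by simp, by simp [h0]⟩
    obtain ⟨w, y, hw⟩ := exists_toeplitz_mulVec_eq_fourier n c hpsd h0 hrank
    have hv : (fun i : Fin (n + 1) => (fourier ((i : ℕ) : ℤ) y : ℂ)) ≠ 0 := by
      intro h
      simpa using congrFun h 0
    obtain ⟨α, hα, hpsd', hlt⟩ := exists_posSemidef_sub_vecMulVec hpsd hw hv
    have hsub : toeplitz n c - (α : ℂ) • Matrix.vecMulVec
        (fun i : Fin (n + 1) => (fourier ((i : ℕ) : ℤ) y : ℂ))
        (star fun i : Fin (n + 1) => (fourier ((i : ℕ) : ℤ) y : ℂ)) =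
        toeplitz n fun m => c m - α * fourier (-m) y := by
      ext i j
      simp only [Matrix.sub_apply, Matrix.smul_apply, Matrix.vecMulVec_apply, toeplitz_apply,
        neg_sub, fourier_sub_eq_mul_conj, Pi.star_apply, smul_eq_mul, starRingEnd_apply]
    rw [hsub] at hpsd' hlt
    obtain ⟨μ, hμ0, hμc, hμ⟩ := ih _ (hr ▸ hlt) _ hpsd' (by omega) rfl
    refine ⟨μ + Finsupp.single y α, fun x => ?_, ?_, fun i j => ?_⟩
    · rw [Finsupp.add_apply, Finsupp.single_apply]
      have := hμ0 x
      split_ifs <;> linarith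
    · have h1 := (Finset.card_le_card (Finsupp.support_add (g₁ := μ) (g₂ := .single y α))).trans
        (Finset.card_union_le _ _)
      have h2 := Finset.card_le_card (Finsupp.support_single_subset (a := y) (b := α))
      rw [Finset.card_singleton] at h2
      omega
    · rw [Finsupp.sum_add_index' (by simp) (by intros; push_cast; ring), ← hμ,
        Finsupp.sum_single_index (by simp), toeplitz_apply, toeplitz_apply, neg_sub]
      ring

/-- A complex measure on at most `2 n + 1` points of the circle whose moments of order at most
`n` vanish is zero. -/
theorem eq_zero_of_fourier_moments_eq_zero (n : ℕ) (s : Finset Circle2pi) (ν : Circle2pi → ℂ)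
    (hs : s.card ≤ 2 * n + 1)
    (h : ∀ m : ℤ, |m| ≤ n → ∑ x ∈ s, ν x * fourier m x = 0) : ∀ x ∈ s, ν x = 0 := by
  classical
  have hpoly : ∀ p : Polynomial ℂ, p.natDegree ≤ 2 * n →
      ∑ x ∈ s, ν x * fourier (-(n : ℤ)) x * p.eval ((AddCircle.toCircle x : Circle) : ℂ) = 0 := by
    intro p hp
    simp only [Polynomial.eval_eq_sum_range, Finset.mul_sum]
    rw [Finset.sum_comm]
    refine Finset.sum_eq_zero fun i hi => ?_
    have hi' : i ≤ 2 * n := by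
      have := Finset.mem_range.1 hi
      omega
    have hm := h (-(n : ℤ) + i) (abs_le.2 ⟨by omega, by omega⟩)
    calc _ = p.coeff i * ∑ x ∈ s, ν x * fourier (-(n : ℤ) + i) x := by
          rw [Finset.mul_sum]
          refine Finset.sum_congr rfl fun x _ => ?_
          rw [fourier_add, fourier_natCast_eq_pow]
          ring
      _ = 0 := by rw [hm, mul_zero]
  intro y hy
  have hinj : Function.Injective fun x : Circle2pi => ((AddCircle.toCircle x : Circle) : ℂ) :=
    Circle.coe_injective.comp (AddCircle.injective_toCircle (by positivity))
  have hy0 := hpoly (∏ x ∈ s.erase y,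
    (Polynomial.X - Polynomial.C ((AddCircle.toCircle x : Circle) : ℂ))) (by
      rw [Polynomial.natDegree_finsetProd_X_sub_C_eq_card, Finset.card_erase_of_mem hy]
      omega)
  rw [Finset.sum_eq_single_of_mem y hy] at hy0
  · refine (mul_eq_zero.1 ((mul_eq_zero.1 hy0).resolve_right ?_)).resolve_right ?_
    · rw [Polynomial.eval_prod]
      refine Finset.prod_ne_zero_iff.2 ?_
      intro x hx
      simpa [sub_eq_zero] using fun hxy => (Finset.ne_of_mem_erase hx) (hinj hxy).symm
    · rw [fourier_apply]
      exact Circle.coe_ne_zero _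
  · intro x hx hxy
    rw [Polynomial.eval_prod, Finset.prod_eq_zero (Finset.mem_erase.2 ⟨hxy, hx⟩) (by simp),
      mul_zero]

theorem Vand_mul_diagonal_mul_conjTranspose_apply (n K : ℕ) (x : Fin K → Circle2pi)
    (a : Fin K → ℝ) (i j : Fin (n + 1)) :
    (Vand n K x * Matrix.diagonal (fun k => (a k : ℂ)) * (Vand n K x)ᴴ) i j =
      ∑ k, (a k : ℂ) * fourier ((i : ℤ) - (j : ℤ)) (x k) := by
  rw [Matrix.mul_apply]
  refine Finset.sum_congr rfl fun k _ => ?_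
  rw [Matrix.mul_diagonal, Matrix.conjTranspose_apply, fourier_sub_eq_mul_conj]
  simp only [Vand, Matrix.of_apply, starRingEnd_apply]
  ring

/-- Two Vandermonde decompositions with at most `n` nodes of the same matrix have the same nodes
and weights. -/
theorem exists_node_eq_of_Vand_eq (n K : ℕ) (hK : K ≤ n) (x x' : Fin K → Circle2pi)
    (a a' : Fin K → ℝ) (hx : Function.Injective x) (hx' : Function.Injective x')
    (ha' : ∀ k, 0 < a' k)
    (h : Vand n K x * Matrix.diagonal (fun k => (a k : ℂ)) * (Vand n K x)ᴴ =
      Vand n K x' * Matrix.diagonal (fun k => (a' k : ℂ)) * (Vand n K x')ᴴ) (k : Fin K) :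
    ∃ l, x' k = x l ∧ a' k = a l := by
  classical
  have hmom : ∀ m : ℤ, |m| ≤ n → ∑ k, (a k : ℂ) * fourier m (x k) =
      ∑ k, (a' k : ℂ) * fourier m (x' k) := by
    intro m hm
    obtain ⟨i, j, rfl⟩ : ∃ i j : Fin (n + 1), (i : ℤ) - (j : ℤ) = m := by
      rw [abs_le] at hm
      refine ⟨⟨m.toNat, by omega⟩, ⟨(-m).toNat, by omega⟩, ?_⟩
      simp only
      omega
    rw [← Vand_mul_diagonal_mul_conjTranspose_apply, h, Vand_mul_diagonal_mul_conjTranspose_apply]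
  let weight (x : Fin K → Circle2pi) (a : Fin K → ℝ) (y : Circle2pi) : ℂ :=
    ∑ l, if x l = y then (a l : ℂ) else 0
  have hweight : ∀ (x : Fin K → Circle2pi) (a : Fin K → ℝ), Function.Injective x →
      ∀ l, weight x a (x l) = a l := by
    intro x a hx l
    simp [weight, hx.eq_iff]
  let s := Finset.univ.image x ∪ Finset.univ.image x'
  have hsum : ∀ (x : Fin K → Circle2pi) (a : Fin K → ℝ), (∀ l, x l ∈ s) → ∀ m : ℤ,
      ∑ y ∈ s, weight x a y * fourier m y = ∑ l, (a l : ℂ) * fourier m (x l) := by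
    intro x a hxs m
    simp only [weight, Finset.sum_mul, ite_mul, zero_mul]
    rw [Finset.sum_comm]
    refine Finset.sum_congr rfl fun l _ => ?_
    rw [Finset.sum_ite_eq, if_pos (hxs l)]
  have hcard : s.card ≤ 2 * n + 1 := by
    have h1 := Finset.card_union_le (Finset.univ.image x) (Finset.univ.image x')
    have h2 : (Finset.univ.image x).card ≤ K := Finset.card_image_le.trans (by simp)
    have h3 : (Finset.univ.image x').card ≤ K := Finset.card_image_le.trans (by simp)
    simp only [s]
    omega
  have hzero := eq_zero_of_fourier_moments_eq_zero n s
    (fun y => weight x a y - weight x' a' y) hcard (fun m hm => by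
      simp only [sub_mul, Finset.sum_sub_distrib]
      rw [hsum x a (by simp [s]), hsum x' a' (by simp [s]), hmom m hm, sub_self])
    (x' k) (by simp [s])
  simp only [hweight x' a' hx', sub_eq_zero] at hzero
  have hk : ∃ l, x l = x' k := by
    by_contra! hne
    simp only [weight, hne, if_false, Finset.sum_const_zero] at hzero
    exact (ha' k).ne' (by exact_mod_cast hzero.symm)
  obtain ⟨l, hl⟩ := hk
  rw [← hl, hweight x a hx] at hzero
  exact ⟨l, hl.symm, by exact_mod_cast hzero.symm⟩

/-- Carathéodory–Fejér–Pisarenko decomposition, rank-deficient case: a positive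
semidefinite Hermitian Toeplitz matrix `T` of rank `r ≤ n` decomposes uniquely (up to a
permutation of the indices) as `T = V D V*` with `V` a Vandermonde matrix built from `r`
pairwise distinct points of `𝕋` and `D` diagonal with strictly positive entries. -/
theorem cfp_decomposition_rank_deficient (n : ℕ) (hn : 1 ≤ n) (c : ℤ → ℂ)
    (hsym : ∀ m : ℤ, |m| ≤ (n : ℤ) → c (-m) = starRingEnd ℂ (c m))
    (T : Matrix (Fin (n + 1)) (Fin (n + 1)) ℂ)
    (hT : T = Matrix.of fun (i j : Fin (n + 1)) => c ((j : ℤ) - (i : ℤ)))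
    (hpsd : T.PosSemidef) (hrank : T.rank ≤ n) :
    ∃ (x : Fin T.rank → Circle2pi) (a : Fin T.rank → ℝ),
      Function.Injective x ∧ (∀ k, 0 < a k) ∧
      T = Vand n T.rank x * Matrix.diagonal (fun k => (a k : ℂ)) * (Vand n T.rank x)ᴴ ∧
      ∀ (x' : Fin T.rank → Circle2pi) (a' : Fin T.rank → ℝ),
        Function.Injective x' → (∀ k, 0 < a' k) →
        T = Vand n T.rank x' * Matrix.diagonal (fun k => (a' k : ℂ)) *
              (Vand n T.rank x')ᴴ →
        ∃ σ : Equiv.Perm (Fin T.rank), x' = x ∘ σ ∧ a' = a ∘ σ := by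
  classical
  obtain ⟨μ, hμ0, hμc, hμ⟩ := exists_finsupp_moment_of_posSemidef n T.rank c
    (by rw [hT] at hpsd; exact hpsd) (by rw [hT] at hrank; exact hrank) (by rw [hT]; rfl)
  have hdecomp : ∀ (K : ℕ) (e : μ.support ≃ Fin K),
      T = Vand n K (fun k => (e.symm k : Circle2pi)) *
        Matrix.diagonal (fun k => ((μ (e.symm k) : ℝ) : ℂ)) *
          (Vand n K (fun k => (e.symm k : Circle2pi)))ᴴ := by
    intro K e
    ext i j
    rw [Vand_mul_diagonal_mul_conjTranspose_apply n K _ (fun k => μ (e.symm k)),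
      e.symm.sum_comp
        (fun y : μ.support => ((μ y : ℝ) : ℂ) * fourier ((i : ℤ) - (j : ℤ)) (y : Circle2pi)),
      Finset.sum_coe_sort μ.support
        (fun y => ((μ y : ℝ) : ℂ) * fourier ((i : ℤ) - (j : ℤ)) y), hT]
    exact hμ i j
  have hcard : μ.support.card = T.rank := by
    refine le_antisymm hμc ?_
    conv_lhs => rw [hdecomp _ μ.support.equivFin]
    rw [Matrix.mul_assoc]
    exact (Matrix.rank_mul_le_left _ _).trans (Matrix.rank_le_width _)
  let e := μ.support.equivFinOfCardEq hcard
  have hinj : Function.Injective fun k => (e.symm k : Circle2pi) :=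
    Subtype.val_injective.comp e.symm.injective
  refine ⟨fun k => e.symm k, fun k => μ (e.symm k), hinj, fun k => ?_, hdecomp _ e, ?_⟩
  · exact lt_of_le_of_ne (hμ0 _) (Finsupp.mem_support_iff.1 (e.symm k).2).symm
  · intro x' a' hx' ha' hT'
    choose f hf hfa using exists_node_eq_of_Vand_eq n T.rank hrank _ x' (fun k => μ (e.symm k)) a'
      hinj hx' ha' ((hdecomp _ e).symm.trans hT')
    have hfinj : Function.Injective f := fun k l hkl => hx' (by rw [hf, hf, hkl])
    exact ⟨Equiv.ofBijective f (Finite.injective_iff_bijective.1 hfinj), funext hf, funext hfa⟩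
end
end

section
/- (Carathéodory–Fejér–Pisarenko decomposition, full-rank case.) Let n ≥ 1 and let T ∈ ℂ^{(n+1)×(n+1)} be a Hermitian Toeplitz matrix that is positive definite. Then for every x₀ ∈ 𝕋 = ℝ/2πℤ there exist pairwise distinct x_1,…,x_{n+1} ∈ 𝕋 with x_1 = x₀ and strictly positive reals a_1,…,a_{n+1} such that T = V D V*, where V ∈ ℂ^{(n+1)×(n+1)} has entries V_{m,k} = e^{i m x_k} (0 ≤ m ≤ n, 1 ≤ k ≤ n+1) and D is the diagonal matrix with diagonal (a_1,…,a_{n+1}). -/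
open MeasureTheory Complex Real Matrix
open scoped Real ComplexOrder

noncomputable section

open Polynomial ComplexConjugate

section ToeplitzForm

variable {n : ℕ} {B : ℂ[X] →ₗ⋆[ℂ] ℂ[X] →ₗ[ℂ] ℂ}

/-- A sesquilinear form on polynomials that restricts to an inner product on those of degree at
most `n`, and for which multiplication by `X` is isometric as long as the degree stays `≤ n`. -/
structure IsToeplitzForm (n : ℕ) (B : ℂ[X] →ₗ⋆[ℂ] ℂ[X] →ₗ[ℂ] ℂ) : Prop where
  conj_symm : ∀ p q, conj (B p q) = B q p
  shift : ∀ p ∈ degreeLT ℂ n, ∀ q ∈ degreeLT ℂ n, B (X * p) (X * q) = B p q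
  pos : ∀ p ∈ degreeLT ℂ (n + 1), p ≠ 0 → 0 < B p p

/-- `p` is a nonzero polynomial of degree at most `n`, orthogonal with respect to `B` to all
polynomials of degree at most `n` vanishing at `ζ`. -/
structure IsKernelAt (n : ℕ) (B : ℂ[X] →ₗ⋆[ℂ] ℂ[X] →ₗ[ℂ] ℂ) (ζ : ℂ) (p : ℂ[X]) : Prop where
  mem : p ∈ degreeLT ℂ (n + 1)
  ne_zero : p ≠ 0
  orth : ∀ r ∈ degreeLT ℂ n, B ((X - C ζ) * r) p = 0

lemma X_sub_C_mul_mem_degreeLT_iff {ζ : ℂ} {q : ℂ[X]} :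
    (X - C ζ) * q ∈ degreeLT ℂ (n + 1) ↔ q ∈ degreeLT ℂ n := by
  rcases eq_or_ne q 0 with rfl | hq
  · simp
  · rw [mem_degreeLT, mem_degreeLT, degree_mul, degree_X_sub_C, degree_eq_natDegree hq]
    norm_cast
    omega

lemma IsToeplitzForm.apply_X_sub_C_mul (hB : IsToeplitzForm n B) (a b : ℂ) {r q : ℂ[X]}
    (hr : r ∈ degreeLT ℂ n) (hq : q ∈ degreeLT ℂ n) :
    B ((X - C a) * r) ((X - C b) * q) =
      (1 + conj a * b) * B r q - b * B (X * r) q - conj a * B r (X * q) := by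
  simp only [sub_mul, ← smul_eq_C_mul, map_sub, LinearMap.sub_apply, map_smulₛₗ,
    LinearMap.smul_apply, hB.shift r hr q hq, smul_eq_mul, RingHom.id_apply]
  ring

lemma IsToeplitzForm.apply_self_ne (hB : IsToeplitzForm n B) {ζ : ℂ} (hζ : ‖ζ‖ = 1) {q : ℂ[X]}
    (hq : q ∈ degreeLT ℂ n) (hq0 : q ≠ 0) : B q q ≠ ζ * B (X * q) q := by
  intro h
  have hpos := hB.pos _ (X_sub_C_mul_mem_degreeLT_iff (ζ := ζ).2 hq)
    (mul_ne_zero (X_sub_C_ne_zero ζ) hq0)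
  have h' : B q q = conj ζ * B q (X * q) := by
    rw [← hB.conj_symm q q, h, map_mul, hB.conj_symm]
  have hζ' : conj ζ * ζ = 1 := by rw [Complex.conj_mul', hζ]; norm_num
  rw [hB.apply_X_sub_C_mul _ _ hq hq, hζ', ← h, ← h'] at hpos
  ring_nf at hpos
  exact hpos.false

lemma IsKernelAt.apply_eq {ζ : ℂ} {p : ℂ[X]} (hp : IsKernelAt n B ζ p) {f : ℂ[X]}
    (hf : f ∈ degreeLT ℂ (n + 1)) : B f p = conj (f.eval ζ) * B 1 p := by
  have hdvd := mul_divByMonic_eq_iff_isRoot (p := f - C (f.eval ζ)) (a := ζ)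
  have hdiv := hdvd.2 (by simp)
  have hC : C (f.eval ζ) ∈ degreeLT ℂ (n + 1) :=
    mem_degreeLT.2 (degree_C_le.trans_lt (by exact_mod_cast n.succ_pos))
  have hmem := X_sub_C_mul_mem_degreeLT_iff.1 (hdiv.symm ▸ Submodule.sub_mem _ hf hC)
  have h := hp.orth _ hmem
  rw [hdiv, map_sub, LinearMap.sub_apply, sub_eq_zero] at h
  rw [h, ← mul_one (C _), ← smul_eq_C_mul, map_smulₛₗ]
  simp

lemma IsKernelAt.eval_ne_zero {ζ : ℂ} {p : ℂ[X]} (hp : IsKernelAt n B ζ p)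
    (hB : IsToeplitzForm n B) : p.eval ζ ≠ 0 := by
  intro h
  have := hB.pos p hp.mem hp.ne_zero
  rw [hp.apply_eq hp.mem, h] at this
  simp at this

lemma IsKernelAt.weight_pos {ζ : ℂ} {p : ℂ[X]} (hp : IsKernelAt n B ζ p)
    (hB : IsToeplitzForm n B) : 0 < B 1 p / p.eval ζ := by
  have hne := hp.eval_ne_zero hB
  have h := hB.pos p hp.mem hp.ne_zero
  rw [hp.apply_eq hp.mem] at h
  have hnorm : (0 : ℂ) < conj (p.eval ζ) * p.eval ζ := by
    rw [Complex.conj_mul']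
    exact_mod_cast pow_pos (norm_pos_iff.2 hne) 2
  have hconj : conj (p.eval ζ) ≠ 0 := (_root_.map_ne_zero _).2 hne
  have heq : B 1 p / p.eval ζ =
      conj (p.eval ζ) * B 1 p * (conj (p.eval ζ) * p.eval ζ)⁻¹ := by
    field_simp
  rw [heq]
  exact mul_pos h (inv_pos.2 hnorm)

lemma IsKernelAt.natDegree_eq {ζ : ℂ} {p : ℂ[X]} (hp : IsKernelAt n B ζ p)
    (hB : IsToeplitzForm n B) (hζ : ‖ζ‖ = 1) : p.natDegree = n := by
  have hle : p.natDegree < n + 1 := by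
    have := mem_degreeLT.1 hp.mem
    rw [degree_eq_natDegree hp.ne_zero] at this
    exact_mod_cast this
  refine le_antisymm (Nat.lt_succ_iff.1 hle) (not_lt.1 fun hlt => ?_)
  have hmem : p ∈ degreeLT ℂ n := by
    rw [mem_degreeLT, degree_eq_natDegree hp.ne_zero]
    exact_mod_cast hlt
  have h := hp.orth p hmem
  simp only [sub_mul, ← smul_eq_C_mul, map_sub, LinearMap.sub_apply, map_smulₛₗ,
    LinearMap.smul_apply, smul_eq_mul, sub_eq_zero] at h
  apply hB.apply_self_ne hζ hmem hp.ne_zero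
  rw [h, ← mul_assoc, Complex.mul_conj', hζ]
  norm_num

lemma IsKernelAt.norm_root {ζ w : ℂ} {q : ℂ[X]} (hp : IsKernelAt n B ζ ((X - C w) * q))
    (hB : IsToeplitzForm n B) (hζ : ‖ζ‖ = 1) : ‖w‖ = 1 := by
  have hq := X_sub_C_mul_mem_degreeLT_iff.1 hp.mem
  have hq0 := right_ne_zero_of_mul hp.ne_zero
  have hne := sub_ne_zero.2 (hB.apply_self_ne hζ hq hq0)
  have h := hp.orth q hq
  rw [hB.apply_X_sub_C_mul _ _ hq hq] at h
  have hζ' : ζ * conj ζ = 1 := by rw [Complex.mul_conj', hζ]; norm_num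
  have hconj : conj (B q q - ζ * B (X * q) q) = B q q - conj ζ * B q (X * q) := by
    rw [map_sub, map_mul, hB.conj_symm, hB.conj_symm]
  have key : w * (B q q - ζ * B (X * q) q) = -ζ * conj (B q q - ζ * B (X * q) q) := by
    rw [hconj]
    linear_combination ζ * h - w * B q q * hζ'
  have hnorm := congrArg norm key
  rw [norm_mul, norm_mul, norm_neg, hζ, RCLike.norm_conj] at hnorm
  exact mul_right_cancel₀ (norm_ne_zero_iff.2 hne) hnorm

/-- Exchanging the base point of a kernel polynomial with one of its roots. -/
lemma IsKernelAt.exchange {ζ w : ℂ} {q : ℂ[X]} (hp : IsKernelAt n B ζ ((X - C w) * q))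
    (hB : IsToeplitzForm n B) (hζ : ‖ζ‖ = 1) : IsKernelAt n B w ((X - C ζ) * q) := by
  have hq := X_sub_C_mul_mem_degreeLT_iff.1 hp.mem
  refine ⟨X_sub_C_mul_mem_degreeLT_iff.2 hq,
    mul_ne_zero (X_sub_C_ne_zero ζ) (right_ne_zero_of_mul hp.ne_zero), fun r hr => ?_⟩
  have h := hp.orth r hr
  rw [hB.apply_X_sub_C_mul _ _ hr hq] at h ⊢
  have hζ' : ζ * conj ζ = 1 := by rw [Complex.mul_conj', hζ]; norm_num
  have hw' : w * conj w = 1 := by rw [Complex.mul_conj', hp.norm_root hB hζ]; norm_num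
  linear_combination ζ * conj w * h + (B r (X * q) * conj w - B r q) * hζ' +
    (ζ * B (X * r) q - ζ * conj ζ * B r q) * hw'

lemma IsKernelAt.exists_roots {ζ : ℂ} {p : ℂ[X]} (hp : IsKernelAt n B ζ p)
    (hB : IsToeplitzForm n B) (hζ : ‖ζ‖ = 1) :
    ∃ w : Fin n → ℂ, Function.Injective w ∧ ∀ k, p.IsRoot (w k) := by
  have hnodup : p.roots.Nodup := by
    refine Multiset.nodup_iff_count_le_one.2 fun w => ?_
    rw [count_roots]
    by_contra! hlt
    obtain ⟨g, hg⟩ := (le_rootMultiplicity_iff hp.ne_zero).1 (Nat.succ_le_of_lt hlt)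
    have hg' : p = (X - C w) * ((X - C w) * g) := by rw [hg]; ring
    have hker := IsKernelAt.exchange (hg' ▸ hp) hB hζ
    exact hker.eval_ne_zero hB (by simp)
  have hcard : p.roots.toFinset.card = n := by
    rw [Multiset.toFinset_card_of_nodup hnodup,
      splits_iff_card_roots.1 (IsAlgClosed.splits p), hp.natDegree_eq hB hζ]
  refine ⟨fun k => ((p.roots.toFinset.equivFinOfCardEq hcard).symm k : ℂ),
    Subtype.val_injective.comp (Equiv.injective _), fun k => ?_⟩
  exact isRoot_of_mem_roots (Multiset.mem_toFinset.1 (Subtype.prop _))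

lemma IsKernelAt.exists_nodes {ζ : ℂ} {p : ℂ[X]} (hp : IsKernelAt n B ζ p)
    (hB : IsToeplitzForm n B) (hζ : ‖ζ‖ = 1) :
    ∃ (z : Fin (n + 1) → ℂ) (f : Fin (n + 1) → ℂ[X]), Function.Injective z ∧ z 0 = ζ ∧
      (∀ k, ‖z k‖ = 1) ∧ (∀ k, IsKernelAt n B (z k) (f k)) ∧
      ∀ k j, j ≠ k → (f k).eval (z j) = 0 := by
  obtain ⟨w, hinj, hroot⟩ := hp.exists_roots hB hζ
  choose q hq using fun k => dvd_iff_isRoot.2 (hroot k)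
  have hker (k : Fin n) : IsKernelAt n B ζ ((X - C (w k)) * q k) := hq k ▸ hp
  refine ⟨Fin.cons ζ w, Fin.cons p fun k => (X - C ζ) * q k, ?_, rfl, ?_, ?_, ?_⟩
  · refine Fin.cons_injective_iff.2 ⟨?_, hinj⟩
    rintro ⟨k, rfl⟩
    exact hp.eval_ne_zero hB (hroot k)
  · exact Fin.cases hζ fun k => (hker k).norm_root hB hζ
  · exact Fin.cases hp fun k => (hker k).exchange hB hζ
  · intro k j hjk
    cases k using Fin.cases with
    | zero =>
      obtain ⟨j, rfl⟩ := Fin.exists_succ_eq.2 hjk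
      exact hroot j
    | succ k =>
      cases j using Fin.cases with
      | zero => simp
      | succ j =>
        have hroot_j : p.eval (w j) = 0 := hroot j
        have hne : w j - w k ≠ 0 := sub_ne_zero.2 fun h => hjk (congrArg Fin.succ (hinj h))
        rw [hq k] at hroot_j
        simp only [eval_mul, eval_sub, eval_X, eval_C, mul_eq_zero, hne, false_or] at hroot_j
        simp [hroot_j]

/-- Gauss-type quadrature for a Toeplitz form from a family of mutually orthogonal kernels. -/
lemma apply_eq_sum_of_isKernelAt (hB : IsToeplitzForm n B) {z : Fin (n + 1) → ℂ}
    {f : Fin (n + 1) → ℂ[X]} (hz : Function.Injective z)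
    (hf : ∀ k, IsKernelAt n B (z k) (f k)) (hzero : ∀ k j, j ≠ k → (f k).eval (z j) = 0)
    {g h : ℂ[X]} (hg : g ∈ degreeLT ℂ (n + 1)) (hh : h ∈ degreeLT ℂ (n + 1)) :
    B g h = ∑ k, conj (g.eval (z k)) * (B 1 (f k) / (f k).eval (z k)) * h.eval (z k) := by
  have hexp : h = ∑ k, (h.eval (z k) / (f k).eval (z k)) • f k := by
    refine eq_of_degrees_lt_of_eval_index_eq Finset.univ hz.injOn ?_ ?_ fun j _ => ?_
    · simpa using mem_degreeLT.1 hh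
    · simpa using mem_degreeLT.1
        (Submodule.sum_mem _ fun k _ => Submodule.smul_mem _ _ (hf k).mem)
    · rw [eval_finsetSum, Finset.sum_eq_single j]
      · rw [eval_smul, smul_eq_mul, div_mul_cancel₀ _ ((hf j).eval_ne_zero hB)]
      · intro k _ hkj
        rw [eval_smul, hzero k j hkj.symm, smul_zero]
      · simp
  conv_lhs => rw [hexp]
  rw [map_sum]
  refine Finset.sum_congr rfl fun k _ => ?_
  rw [map_smul, (hf k).apply_eq hg, smul_eq_mul]
  ring

end ToeplitzForm

/-- The sesquilinear form on polynomials induced by a matrix acting on coefficient vectors. -/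
def matrixForm {n : ℕ} (T : Matrix (Fin (n + 1)) (Fin (n + 1)) ℂ) :
    ℂ[X] →ₗ⋆[ℂ] ℂ[X] →ₗ[ℂ] ℂ :=
  LinearMap.mk₂'ₛₗ (starRingEnd ℂ) (RingHom.id ℂ)
    (fun p q => ∑ i : Fin (n + 1), ∑ j : Fin (n + 1), conj (p.coeff i) * T i j * q.coeff j)
    (fun p p' q => by simp [add_mul, Finset.sum_add_distrib])
    (fun a p q => by simp [Finset.mul_sum, mul_assoc])
    (fun p q q' => by simp [mul_add, Finset.sum_add_distrib])
    (fun a p q => by simp [Finset.mul_sum, mul_left_comm])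

lemma matrixForm_apply {n : ℕ} (T : Matrix (Fin (n + 1)) (Fin (n + 1)) ℂ) (p q : ℂ[X]) :
    matrixForm T p q =
      ∑ i : Fin (n + 1), ∑ j : Fin (n + 1), conj (p.coeff i) * T i j * q.coeff j := rfl

lemma matrixForm_apply_eq_dotProduct {n : ℕ} (T : Matrix (Fin (n + 1)) (Fin (n + 1)) ℂ)
    (p q : ℂ[X]) : matrixForm T p q =
      star (fun i : Fin (n + 1) => p.coeff i) ⬝ᵥ T *ᵥ fun j : Fin (n + 1) => q.coeff j := by
  simp [matrixForm_apply, dotProduct, mulVec, Finset.mul_sum, mul_assoc]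

lemma matrixForm_X_pow {n : ℕ} (T : Matrix (Fin (n + 1)) (Fin (n + 1)) ℂ)
    (i j : Fin (n + 1)) : matrixForm T (X ^ (i : ℕ)) (X ^ (j : ℕ)) = T i j := by
  simp [matrixForm_apply, coeff_X_pow, Fin.val_inj]

lemma isToeplitzForm_matrixForm {n : ℕ} {T : Matrix (Fin (n + 1)) (Fin (n + 1)) ℂ} {c : ℤ → ℂ}
    (hT : T = Matrix.of fun (i j : Fin (n + 1)) => c ((j : ℤ) - (i : ℤ))) (hpd : T.PosDef) :
    IsToeplitzForm n (matrixForm T) where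
  conj_symm p q := by
    simp only [matrixForm_apply, map_sum, map_mul, Complex.conj_conj]
    rw [Finset.sum_comm]
    refine Finset.sum_congr rfl fun i _ => Finset.sum_congr rfl fun j _ => ?_
    rw [← hpd.isHermitian.apply i j, starRingEnd_apply (T j i)]
    ring
  shift p hp q hq := by
    have hp' : p.coeff n = 0 := coeff_eq_zero_of_degree_lt (mem_degreeLT.1 hp)
    have hq' : q.coeff n = 0 := coeff_eq_zero_of_degree_lt (mem_degreeLT.1 hq)
    have hshift (i j : Fin n) : T i.succ j.succ = T i.castSucc j.castSucc := by
      simp [hT]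
    rw [matrixForm_apply, matrixForm_apply, Fin.sum_univ_succ]
    conv_rhs => rw [Fin.sum_univ_castSucc]
    simp only [Fin.sum_univ_succ (n := n) (fun j => conj _ * T _ j * (X * q).coeff j),
      Fin.sum_univ_castSucc (n := n) (fun j => conj _ * T _ j * q.coeff j)]
    simp [hp', hq', hshift]
  pos p hp hp0 := by
    rw [matrixForm_apply_eq_dotProduct]
    refine hpd.dotProduct_mulVec_pos fun h => hp0 (Polynomial.ext fun i => ?_)
    rcases lt_or_ge i (n + 1) with hi | hi
    · simpa using congrFun h ⟨i, hi⟩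
    · exact coeff_eq_zero_of_degree_lt
        ((mem_degreeLT.1 hp).trans_le (by exact_mod_cast hi))

lemma exists_isKernelAt_matrixForm {n : ℕ} {T : Matrix (Fin (n + 1)) (Fin (n + 1)) ℂ}
    (hpd : T.PosDef) (ζ : ℂ) : ∃ p, IsKernelAt n (matrixForm T) ζ p := by
  obtain ⟨u, hu⟩ := (Matrix.mulVec_surjective_iff_isUnit.2 hpd.isUnit)
    fun i : Fin (n + 1) => conj ζ ^ (i : ℕ)
  have hcoeff : (fun i : Fin (n + 1) => ((degreeLTEquiv ℂ (n + 1)).symm u : ℂ[X]).coeff i) = u :=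
    (degreeLTEquiv ℂ (n + 1)).apply_symm_apply u
  refine ⟨(degreeLTEquiv ℂ (n + 1)).symm u, Subtype.prop _, fun h => ?_, fun r hr => ?_⟩
  · have hu0 : u = 0 := by rw [← hcoeff, h]; rfl
    have := congrFun hu 0
    simp [hu0] at this
  · have hmem := X_sub_C_mul_mem_degreeLT_iff (ζ := ζ).2 hr
    rw [matrixForm_apply_eq_dotProduct, hcoeff, hu]
    have heval := eval_eq_sum_degreeLTEquiv hmem ζ
    have h0 := congrArg conj heval
    simp only [eval_mul, eval_sub, eval_X, eval_C, sub_self, zero_mul, map_zero, map_sum,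
      map_mul, map_pow] at h0
    exact h0.symm

/-- Carathéodory–Fejér–Pisarenko decomposition, full-rank case: a positive definite
Hermitian Toeplitz matrix `T ∈ ℂ^{(n+1)×(n+1)}` decomposes as `T = V D V*` with `V` a
Vandermonde matrix built from `n + 1` pairwise distinct points of `𝕋`, one of which can
be chosen arbitrarily, and `D` diagonal with strictly positive entries. -/
theorem cfp_decomposition_full_rank (n : ℕ) (hn : 1 ≤ n) (c : ℤ → ℂ)
    (hsym : ∀ m : ℤ, |m| ≤ (n : ℤ) → c (-m) = starRingEnd ℂ (c m))
    (T : Matrix (Fin (n + 1)) (Fin (n + 1)) ℂ)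
    (hT : T = Matrix.of fun (i j : Fin (n + 1)) => c ((j : ℤ) - (i : ℤ)))
    (hpd : T.PosDef) :
    ∀ x₀ : Circle2pi,
      ∃ (x : Fin (n + 1) → Circle2pi) (a : Fin (n + 1) → ℝ),
        Function.Injective x ∧ x 0 = x₀ ∧ (∀ k, 0 < a k) ∧
        T = Vand n (n + 1) x * Matrix.diagonal (fun k => (a k : ℂ)) *
              (Vand n (n + 1) x)ᴴ := by
  intro x₀
  have hB := isToeplitzForm_matrixForm hT hpd
  obtain ⟨p, hp⟩ := exists_isKernelAt_matrixForm hpd (conj (x₀.toCircle : ℂ))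
  obtain ⟨z, f, hinj, hz0, hnorm, hf, hzero⟩ := hp.exists_nodes hB
    (by rw [RCLike.norm_conj]; exact Circle.norm_coe _)
  have hlift (k : Fin (n + 1)) : ∃ x : Circle2pi, (x.toCircle : ℂ) = conj (z k) := by
    obtain ⟨x, hx⟩ := (AddCircle.homeomorphCircle (T := 2 * π) (by positivity)).surjective
      ⟨conj (z k), mem_sphere_zero_iff_norm.2 (by simpa using hnorm k)⟩
    rw [AddCircle.homeomorphCircle_apply] at hx
    exact ⟨x, congrArg Subtype.val hx⟩
  choose x hx using hlift
  refine ⟨x, fun k => (matrixForm T 1 (f k) / (f k).eval (z k)).re, fun j k hjk => hinj ?_, ?_,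
    fun k => (Complex.pos_iff.1 ((hf k).weight_pos hB)).1, ?_⟩
  · apply (starRingEnd ℂ).injective
    rw [← hx, ← hx, hjk]
  · apply AddCircle.injective_toCircle (T := 2 * π) (by positivity)
    apply Subtype.val_injective
    rw [hx, hz0, Complex.conj_conj]
  · ext i j
    have hweight (k : Fin (n + 1)) : ((matrixForm T 1 (f k) / (f k).eval (z k)).re : ℂ) =
        matrixForm T 1 (f k) / (f k).eval (z k) :=
      Complex.ext rfl (Complex.pos_iff.1 ((hf k).weight_pos hB)).2
    have hmem (m : Fin (n + 1)) : (X ^ (m : ℕ) : ℂ[X]) ∈ degreeLT ℂ (n + 1) := by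
      rw [mem_degreeLT, degree_X_pow]
      exact_mod_cast m.isLt
    have hentry (m k : Fin (n + 1)) : Vand n (n + 1) x m k = conj (z k) ^ (m : ℕ) := by
      rw [Vand, Matrix.of_apply, fourier_apply, ← hx, AddCircle.toCircle_zsmul]
      simp
    rw [← matrixForm_X_pow T i j,
      apply_eq_sum_of_isKernelAt hB hinj hf hzero (hmem i) (hmem j), Matrix.mul_apply]
    refine Finset.sum_congr rfl fun k _ => ?_
    rw [Matrix.mul_diagonal, Matrix.conjTranspose_apply, hentry, hentry, hweight]
    simp
end
end
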